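/- arXiv:2405.06871 — 2 statements merged into one kernel-verified Lean document; each statement's English description precedes it below -/
import Mathlib

section
/- Assume A1 and A2, and fix r ≥ 1. Let H(x,v) = γ|x|² + 2⟨x,v⟩ + |v|² and H_r(x,v) = (H(x,v)+1)^r. There exists γ₀ > 0 such that for every γ ≥ γ₀ there exist constants a₁, b₁, h₀ > 0 such that for every 0 < h ≤ h₀, every (x₀,v₀) ∈ ℝ^d × ℝ^d, and ξ a standard Gaussian random vector in ℝ^d, the one-step Euler–Maruyama update (x₁,v₁) = (x₀ + hv₀, v₀ − h∇U(x₀) − γhv₀ + √(2γh)·ξ) satisfies E[H_r(x₁,v₁)] ≤ e^{−a₁h}·H_r(x₀,v₀) + b₁h. -/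
open MeasureTheory ProbabilityTheory RealInnerProductSpace
open scoped ENNReal

/-!
The function `H + 1` is a Lyapunov function for the scheme because both the drift and the noise
act on it in a controlled way. Integrating `m ≤ ∇²U` along rays outside the ball gives
`⟪x, ∇U x⟫ ≥ (m / 2) ‖x‖² - K`. Since `H` is a quadratic form, the noiseless step turns `H` into
`H + h L + h² H(v, -(∇U x + γ v))`, where `L` is at most `-c (‖x‖² + ‖v‖²)` plus a constant once
`γ` is large, so `B = H + 1` becomes at most `A = (1 - a h) B + k h`.

The noise adds `2 σ ⟪y, ξ⟫ + σ² ‖ξ‖²` with `σ² = 2 γ h` and `y` the sum of the position and velocity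
after the noiseless step, and `‖y‖² ≤ A` because `H(x, v) = (γ - 1) ‖x‖² + ‖x + v‖²`. Relative to
`A` this perturbation has size `σ / √A`, and its linear part has mean zero, so a second-order
expansion of the `r`-th power only costs a factor `1 + O(h / A)`. Altogether `B ^ r` is multiplied
by at most `exp ((-r a + k' / B) h)`, which contracts when `B` is large and adds `O(h)` when `B` is
bounded.
-/

section Scalar

lemma one_add_rpow_le {r δ : ℝ} (hr : 0 ≤ r) (hδ : -1 ≤ δ) :
    (1 + δ) ^ r ≤ 1 + r * δ + (r * δ) ^ 2 * (1 + |δ|) ^ r := by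
  have one_le_pow : 1 ≤ (1 + |δ|) ^ r :=
    Real.one_le_rpow (le_add_of_nonneg_right (abs_nonneg δ)) hr
  have sq_le : (r * δ) ^ 2 ≤ (r * δ) ^ 2 * (1 + |δ|) ^ r :=
    le_mul_of_one_le_right (sq_nonneg _) one_le_pow
  rcases le_or_gt |r * δ| 1 with small | large
  · have pow_le_exp : (1 + δ) ^ r ≤ Real.exp (r * δ) := by
      rw [mul_comm, Real.exp_mul]
      exact Real.rpow_le_rpow (by linarith) (by linarith [Real.add_one_le_exp δ]) hr
    linarith [(abs_le.1 (Real.abs_exp_sub_one_sub_id_le small)).2]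
  · have one_le_sq : 1 ≤ (r * δ) ^ 2 := (one_le_sq_iff_one_le_abs _).2 large.le
    rcases le_or_gt 0 δ with nonneg | neg
    · rw [abs_of_nonneg nonneg]
      rw [abs_of_nonneg nonneg] at one_le_pow
      linarith [mul_nonneg hr nonneg,
        le_mul_of_one_le_left (zero_le_one.trans one_le_pow) one_le_sq]
    · have pow_le_one : (1 + δ) ^ r ≤ 1 := Real.rpow_le_one (by linarith) (by linarith) hr
      have neg_le_sq : -(r * δ) ≤ (r * δ) ^ 2 := by
        rw [← sq_abs]
        nlinarith [neg_le_abs (r * δ)]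
      linarith

lemma sq_mul_one_add_rpow_le {r τ u δ : ℝ} (hr : 0 ≤ r) (hτ0 : 0 ≤ τ) (hτ1 : τ ≤ 1) (hu : 0 ≤ u)
    (hδ0 : 0 ≤ δ) (hδ : δ ≤ 2 * τ * u + τ ^ 2 * u ^ 2) :
    δ ^ 2 * (1 + δ) ^ r ≤ τ ^ 2 * (1 + u) ^ (2 * r + 4) := by
  have le_scaled : δ ≤ τ * (1 + u) ^ 2 := by
    have : τ ^ 2 * u ^ 2 ≤ τ * u ^ 2 := by gcongr; exact pow_le_of_le_one hτ0 hτ1 two_ne_zero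
    linarith
  have one_add_le : 1 + δ ≤ (1 + u) ^ 2 := by
    have : τ * u ≤ u := mul_le_of_le_one_left hu hτ1
    have : τ ^ 2 * u ^ 2 ≤ u ^ 2 := mul_le_of_le_one_left (sq_nonneg u) (pow_le_one₀ hτ0 hτ1)
    linarith
  calc δ ^ 2 * (1 + δ) ^ r ≤ (τ * (1 + u) ^ 2) ^ 2 * ((1 + u) ^ 2) ^ r := by gcongr
    _ = τ ^ 2 * ((1 + u) ^ (2 * r) * (1 + u) ^ (4 : ℕ)) := by
        rw [← Real.rpow_natCast_mul (by positivity)]; push_cast; ring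
    _ = _ := by rw [← Real.rpow_add_natCast (by positivity)]; push_cast; rfl

lemma rpow_mul_one_add_le_rpow_mul_exp {r a k l h A B : ℝ} (hr : 0 ≤ r) (hk : 0 ≤ k)
    (hl : 0 ≤ l) (hh : 0 ≤ h) (hah : a * h ≤ 1 / 2) (hB : 0 < B)
    (hA : A = (1 - a * h) * B + k * h) :
    A ^ r * (1 + l * h / A) ≤ B ^ r * Real.exp ((-(r * a) + (r * k + 2 * l) / B) * h) := by
  have half_le : B / 2 ≤ A := by nlinarith [mul_nonneg hk hh]
  have hA0 : 0 < A := by linarith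
  have pow_le : A ^ r ≤ B ^ r * Real.exp (r * (-(a * h) + k * h / B)) := by
    have ratio_le : A ≤ B * Real.exp (-(a * h) + k * h / B) :=
      calc A = B * (-(a * h) + k * h / B + 1) := by rw [hA]; field_simp; ring
        _ ≤ _ := by gcongr; exact Real.add_one_le_exp _
    calc A ^ r ≤ (B * Real.exp (-(a * h) + k * h / B)) ^ r := by gcongr
      _ = _ := by rw [Real.mul_rpow hB.le (Real.exp_pos _).le, ← Real.exp_mul, mul_comm r]
  have correction_le : 1 + l * h / A ≤ Real.exp (2 * l * h / B) :=
    calc 1 + l * h / A ≤ 1 + l * h / (B / 2) := by gcongr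
      _ = 2 * l * h / B + 1 := by field_simp; ring
      _ ≤ _ := Real.add_one_le_exp _
  calc A ^ r * (1 + l * h / A)
      ≤ B ^ r * Real.exp (r * (-(a * h) + k * h / B)) * Real.exp (2 * l * h / B) := by gcongr
    _ = _ := by rw [mul_assoc, ← Real.exp_add]; congr 2; ring

lemma exp_mul_le_one_add {k h : ℝ} (hk : 0 ≤ k) (hh : 0 ≤ h) (hh1 : h ≤ 1) :
    Real.exp (k * h) ≤ 1 + k * Real.exp k * h := by
  have exp_mul_one_sub_le : Real.exp (k * h) * (1 - k * h) ≤ 1 :=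
    calc _ ≤ Real.exp (k * h) * Real.exp (-(k * h)) := by
          gcongr; exact Real.one_sub_le_exp_neg _
      _ = 1 := by rw [← Real.exp_add, add_neg_cancel, Real.exp_zero]
  have : Real.exp (k * h) * (k * h) ≤ Real.exp k * (k * h) := by
    gcongr; exact mul_le_of_le_one_right hk hh1
  linarith

lemma exists_rpow_mul_exp_le {c k r : ℝ} (hc : 0 < c) (hk : 0 ≤ k) (hr : 0 ≤ r) :
    ∃ b > 0, ∀ h, 0 ≤ h → h ≤ 1 → ∀ B, 1 ≤ B →
      B ^ r * Real.exp ((-c + k / B) * h) ≤ Real.exp (-(c / 2) * h) * B ^ r + b * h := by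
  refine ⟨(2 * k / c) ^ r * (k * Real.exp k) + 1, by positivity, fun h hh hh1 B hB => ?_⟩
  have hB0 : 0 < B := by linarith
  rcases le_or_gt (2 * k / c) B with large | small
  · have rate_le : -c + k / B ≤ -(c / 2) := by
      have : k / B ≤ c / 2 := by
        rw [div_le_iff₀ hc] at large
        rw [div_le_iff₀ hB0]
        linarith
      linarith
    calc B ^ r * Real.exp ((-c + k / B) * h) ≤ B ^ r * Real.exp (-(c / 2) * h) := by gcongr
      _ ≤ _ := by rw [mul_comm]; exact le_add_of_nonneg_right (by positivity)
  · have discount_le_one : Real.exp (-(c / 2) * h) ≤ 1 :=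
      Real.exp_le_one_iff.2 (by linarith [mul_nonneg hc.le hh])
    have exp_le : Real.exp ((-c + k / B) * h) ≤ Real.exp (-(c / 2) * h) + k * Real.exp k * h :=
      calc Real.exp ((-c + k / B) * h) ≤ Real.exp (-(c / 2) * h + k * h) := by
            gcongr
            have : k / B * h ≤ k * h := by gcongr; exact div_le_self hk hB
            linarith [mul_nonneg hc.le hh]
        _ ≤ Real.exp (-(c / 2) * h) * (1 + k * Real.exp k * h) := by
            rw [Real.exp_add]; gcongr; exact exp_mul_le_one_add hk hh hh1
        _ ≤ _ := by
            rw [mul_one_add]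
            exact add_le_add_right (mul_le_of_le_one_left (by positivity) discount_le_one) _
    calc B ^ r * Real.exp ((-c + k / B) * h)
        ≤ B ^ r * (Real.exp (-(c / 2) * h) + k * Real.exp k * h) := by gcongr
      _ = Real.exp (-(c / 2) * h) * B ^ r + B ^ r * (k * Real.exp k * h) := by ring
      _ ≤ Real.exp (-(c / 2) * h) * B ^ r + (2 * k / c) ^ r * (k * Real.exp k * h) := by gcongr
      _ ≤ _ := by linarith

end Scalar

section Convexity

variable {E : Type*} [NormedAddCommGroup E] [NormedSpace ℝ E] {U : E → ℝ}

lemma hasDerivAt_fderiv_smul_apply (hU : ContDiff ℝ 2 U) (x : E) (t : ℝ) :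
    HasDerivAt (fun t : ℝ => fderiv ℝ U (t • x) x) (iteratedFDeriv ℝ 2 U (t • x) ![x, x]) t := by
  have hU' : DifferentiableAt ℝ (fderiv ℝ U) (t • x) :=
    (hU.fderiv_right (m := 1) (by norm_num)).differentiable (by norm_num) _
  have hray : HasDerivAt (fun t : ℝ => t • x) x t := by simpa using (hasDerivAt_id t).smul_const x
  have hchain : HasDerivAt (fun t : ℝ => fderiv ℝ U (t • x)) (fderiv ℝ (fderiv ℝ U) (t • x) x) t :=
    hU'.hasFDerivAt.comp_hasDerivAt t hray
  have hderiv := hchain.clm_apply (hasDerivAt_const t x)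
  rw [map_zero, add_zero] at hderiv
  rw [iteratedFDeriv_two_apply]
  exact hderiv

lemma mul_one_sub_le_fderiv_sub_fderiv_smul (hU : ContDiff ℝ 2 U) {c s : ℝ} {x : E} (hs : s ≤ 1)
    (hc : ∀ t ∈ Set.Ioo s 1, c ≤ iteratedFDeriv ℝ 2 U (t • x) ![x, x]) :
    c * (1 - s) ≤ fderiv ℝ U x x - fderiv ℝ U (s • x) x := by
  have hderiv := hasDerivAt_fderiv_smul_apply hU x
  have mean_value := (convex_Icc s 1).mul_sub_le_image_sub_of_le_deriv
    (fun t _ => (hderiv t).continuousAt.continuousWithinAt)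
    (fun t _ => (hderiv t).differentiableAt.differentiableWithinAt)
    (fun t ht => by rw [(hderiv t).deriv]; exact hc t (by rwa [interior_Icc] at ht))
    s ⟨le_rfl, hs⟩ 1 ⟨hs, le_rfl⟩ hs
  rwa [one_smul] at mean_value

lemma exists_mul_norm_sq_sub_le_fderiv_apply_self (hU : ContDiff ℝ 2 U) {m R G : ℝ} (hm : 0 < m)
    (hR : 0 < R) (hG : ∀ x, ‖x‖ ≤ R → ‖fderiv ℝ U x‖ ≤ G)
    (hconv : ∀ x, R ≤ ‖x‖ → ∀ y, m * ‖y‖ ^ 2 ≤ iteratedFDeriv ℝ 2 U x ![y, y]) :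
    ∃ K, ∀ x, m / 2 * ‖x‖ ^ 2 - K ≤ fderiv ℝ U x x := by
  have hG0 : 0 ≤ G := (norm_nonneg _).trans (hG 0 (by simpa using hR.le))
  have fderiv_ge : ∀ y, ‖y‖ ≤ R → ∀ x, -(G * ‖x‖) ≤ fderiv ℝ U y x := fun y hy x =>
    (abs_le.1 ((fderiv ℝ U y).le_of_opNorm_le (hG y hy) x)).1
  refine ⟨(G + m * R) ^ 2 / m, fun x => ?_⟩
  rcases le_or_gt ‖x‖ R with inside | outside
  · have hK : (G + m * R) * R ≤ (G + m * R) ^ 2 / m := by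
      rw [le_div_iff₀ hm]
      nlinarith [mul_nonneg hG0 (by positivity : 0 ≤ G + m * R)]
    nlinarith [fderiv_ge x inside x, mul_le_mul_of_nonneg_left inside hG0,
      mul_le_mul inside inside (norm_nonneg x) hR.le]
  · have hx : 0 < ‖x‖ := hR.trans outside
    have norm_entry : ‖(R / ‖x‖) • x‖ = R := by
      rw [norm_smul, Real.norm_of_nonneg (by positivity), div_mul_cancel₀ _ hx.ne']
    have radial := mul_one_sub_le_fderiv_sub_fderiv_smul hU (x := x) (c := m * ‖x‖ ^ 2)
      ((div_le_one hx).2 outside.le) fun t ht => hconv _ (by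
        rw [norm_smul, Real.norm_of_nonneg ((by positivity : 0 ≤ R / ‖x‖).trans ht.1.le)]
        exact ((div_lt_iff₀ hx).1 ht.1).le) x
    have gain : m * ‖x‖ ^ 2 * (1 - R / ‖x‖) = m * ‖x‖ ^ 2 - m * R * ‖x‖ := by field_simp
    have absorb : (G + m * R) * ‖x‖ ≤ m / 2 * ‖x‖ ^ 2 + (G + m * R) ^ 2 / m := by
      have complete_square : m / 2 * ‖x‖ ^ 2 + (G + m * R) ^ 2 / m - (G + m * R) * ‖x‖
          = ((m * ‖x‖ - (G + m * R)) ^ 2 + (G + m * R) ^ 2) / (2 * m) := by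
        field_simp
        ring
      have : 0 ≤ ((m * ‖x‖ - (G + m * R)) ^ 2 + (G + m * R) ^ 2) / (2 * m) := by positivity
      linarith
    linarith [fderiv_ge _ norm_entry.le x]

end Convexity

lemma exists_mul_norm_sq_sub_le_inner_gradient {E : Type*} [NormedAddCommGroup E]
    [InnerProductSpace ℝ E] [CompleteSpace E] {U : E → ℝ} (hU : ContDiff ℝ 2 U) {C m R : ℝ}
    (hm : 0 < m) (hR : 0 < R) (hgrad : ∀ x, ‖gradient U x‖ ≤ C * (‖x‖ + 1))
    (hconv : ∀ x, R ≤ ‖x‖ → ∀ y, m * ‖y‖ ^ 2 ≤ iteratedFDeriv ℝ 2 U x ![y, y]) :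
    ∃ K, ∀ x, m / 2 * ‖x‖ ^ 2 - K ≤ ⟪x, gradient U x⟫ := by
  have hC : 0 ≤ C := by simpa using (norm_nonneg _).trans (hgrad 0)
  have fderiv_le : ∀ x, ‖x‖ ≤ R → ‖fderiv ℝ U x‖ ≤ C * (R + 1) := fun x hx =>
    calc ‖fderiv ℝ U x‖ = ‖gradient U x‖ := by rw [← toDual_gradient, LinearIsometryEquiv.norm_map]
      _ ≤ C * (‖x‖ + 1) := hgrad x
      _ ≤ _ := by gcongr
  simpa only [inner_gradient_right, conj_trivial] using
    exists_mul_norm_sq_sub_le_fderiv_apply_self hU hm hR fderiv_le hconv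

section Lyapunov

variable {E : Type*} [NormedAddCommGroup E] [InnerProductSpace ℝ E]

/-- The quadratic Lyapunov function `H` of the underdamped Langevin dynamics with friction `γ`, at
position `x` and velocity `v`. -/
def lyapunov (γ : ℝ) (x v : E) : ℝ := γ * ‖x‖ ^ 2 + 2 * ⟪x, v⟫ + ‖v‖ ^ 2

lemma norm_add_sq_le_lyapunov {γ : ℝ} (hγ : 1 ≤ γ) (x v : E) : ‖x + v‖ ^ 2 ≤ lyapunov γ x v := by
  rw [norm_add_sq_real, lyapunov]
  nlinarith [sq_nonneg ‖x‖]

lemma lyapunov_nonneg {γ : ℝ} (hγ : 1 ≤ γ) (x v : E) : 0 ≤ lyapunov γ x v :=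
  (sq_nonneg _).trans (norm_add_sq_le_lyapunov hγ x v)

lemma lyapunov_le {γ : ℝ} (hγ : 1 ≤ γ) (x v : E) :
    lyapunov γ x v ≤ (γ + 1) * (‖x‖ ^ 2 + ‖v‖ ^ 2) := by
  rw [lyapunov]
  nlinarith [real_inner_le_norm x v, sq_nonneg (‖x‖ - ‖v‖), sq_nonneg ‖v‖]

lemma lyapunov_add_smul_right (γ σ : ℝ) (x v z : E) :
    lyapunov γ x (v + σ • z) =
      lyapunov γ x v + 2 * σ * ⟪x + v, z⟫ + σ ^ 2 * ‖z‖ ^ 2 := by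
  simp only [lyapunov, norm_add_sq_real, norm_smul, mul_pow, Real.norm_eq_abs, sq_abs,
    inner_add_left, inner_add_right, real_inner_smul_right]
  ring

lemma lyapunov_noiseless_step (γ h : ℝ) (x v g : E) :
    lyapunov γ (x + h • v) (v - h • g - (γ * h) • v) =
      lyapunov γ x v + h * (-2 * ⟪x, g⟫ - 2 * (γ - 1) * ‖v‖ ^ 2 - 2 * ⟪v, g⟫) +
        h ^ 2 * lyapunov γ v (-(g + γ • v)) := by
  simp only [lyapunov, ← real_inner_self_eq_norm_sq, inner_add_left, inner_add_right,
    inner_sub_left, inner_sub_right, inner_neg_left, inner_neg_right, real_inner_smul_left,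
    real_inner_smul_right, real_inner_comm x v, real_inner_comm v g]
  ring

section Step

variable {C m K γ : ℝ} {x v g : E}

lemma lyapunov_drift_le (hm : 0 < m) (hγ : 2 + 2 * C ^ 2 / m ≤ γ) (hg : ‖g‖ ≤ C * (‖x‖ + 1))
    (hxg : m * ‖x‖ ^ 2 - K ≤ ⟪x, g⟫) :
    -2 * ⟪x, g⟫ - 2 * (γ - 1) * ‖v‖ ^ 2 - 2 * ⟪v, g⟫ ≤
      -(min m 1 * (‖x‖ ^ 2 + ‖v‖ ^ 2)) + (2 * K + m) := by
  have cross_le : -2 * ⟪v, g⟫ ≤ m * (‖x‖ ^ 2 + 1) + 2 * C ^ 2 / m * ‖v‖ ^ 2 := by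
    have complete_square : m / 2 * (‖x‖ + 1) ^ 2 + 2 * C ^ 2 / m * ‖v‖ ^ 2
        - 2 * (‖v‖ * (C * (‖x‖ + 1))) = (m * (‖x‖ + 1) - 2 * C * ‖v‖) ^ 2 / (2 * m) := by
      field_simp
      ring
    have : 0 ≤ (m * (‖x‖ + 1) - 2 * C * ‖v‖) ^ 2 / (2 * m) := by positivity
    have : 0 ≤ m / 2 * (‖x‖ - 1) ^ 2 := by positivity
    have := mul_le_mul_of_nonneg_left hg (norm_nonneg v)
    linarith [(abs_le.1 (abs_real_inner_le_norm v g)).1]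
  have friction : (2 + 2 * C ^ 2 / m) * ‖v‖ ^ 2 ≤ γ * ‖v‖ ^ 2 := by gcongr
  have position : min m 1 * ‖x‖ ^ 2 ≤ m * ‖x‖ ^ 2 := by gcongr; exact min_le_left m 1
  have velocity : min m 1 * ‖v‖ ^ 2 ≤ 1 * ‖v‖ ^ 2 := by gcongr; exact min_le_right m 1
  have : 0 ≤ 2 * C ^ 2 / m * ‖v‖ ^ 2 := by positivity
  linarith [sq_nonneg ‖v‖]

lemma lyapunov_second_order_le (hγ : 1 ≤ γ) (hg : ‖g‖ ≤ C * (‖x‖ + 1)) :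
    lyapunov γ v (-(g + γ • v)) ≤
      (γ + 1) * (1 + 2 * γ ^ 2 + 4 * C ^ 2) * (‖x‖ ^ 2 + ‖v‖ ^ 2 + 1) := by
  have force_sq_le : ‖g‖ ^ 2 ≤ 2 * C ^ 2 * (‖x‖ ^ 2 + 1) :=
    calc ‖g‖ ^ 2 ≤ (C * (‖x‖ + 1)) ^ 2 := by gcongr
      _ = C ^ 2 * (‖x‖ + 1) ^ 2 := by ring
      _ ≤ C ^ 2 * (2 * (‖x‖ ^ 2 + 1)) := by gcongr; nlinarith [sq_nonneg (‖x‖ - 1)]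
      _ = _ := by ring
  have velocity_sq_le : ‖-(g + γ • v)‖ ^ 2 ≤ 2 * (‖g‖ ^ 2 + γ ^ 2 * ‖v‖ ^ 2) :=
    calc ‖-(g + γ • v)‖ ^ 2 ≤ (‖g‖ + ‖γ • v‖) ^ 2 := by
          rw [norm_neg]; gcongr; exact norm_add_le _ _
      _ ≤ 2 * (‖g‖ ^ 2 + ‖γ • v‖ ^ 2) := add_sq_le
      _ = _ := by rw [norm_smul, mul_pow, Real.norm_eq_abs, sq_abs]
  calc lyapunov γ v (-(g + γ • v)) ≤ (γ + 1) * (‖v‖ ^ 2 + ‖-(g + γ • v)‖ ^ 2) := lyapunov_le hγ _ _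
    _ ≤ (γ + 1) * ((1 + 2 * γ ^ 2 + 4 * C ^ 2) * (‖x‖ ^ 2 + ‖v‖ ^ 2 + 1)) := by
        gcongr
        have : 0 ≤ (1 + 2 * γ ^ 2) * (‖x‖ ^ 2 + 1) + 4 * C ^ 2 * ‖v‖ ^ 2 := by positivity
        linarith
    _ = _ := by ring

end Step

lemma exists_lyapunov_noiseless_step_le {F : E → E} {C m K γ : ℝ} (hm : 0 < m)
    (hF : ∀ x, ‖F x‖ ≤ C * (‖x‖ + 1)) (hFx : ∀ x, m * ‖x‖ ^ 2 - K ≤ ⟪x, F x⟫)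
    (hγ : 2 + 2 * C ^ 2 / m ≤ γ) :
    ∃ a > 0, ∃ k ≥ 0, ∃ h₀ > 0, ∀ h, 0 ≤ h → h ≤ h₀ → ∀ x v : E,
      lyapunov γ (x + h • v) (v - h • F x - (γ * h) • v) + 1 ≤
        (1 - a * h) * (lyapunov γ x v + 1) + k * h := by
  have hγ1 : 1 ≤ γ := by linarith [(by positivity : 0 ≤ 2 * C ^ 2 / m)]
  have hK : 0 ≤ K := by simpa using hFx 0
  set c := min m 1
  have hc0 : 0 < c := lt_min hm one_pos
  set Q := (γ + 1) * (1 + 2 * γ ^ 2 + 4 * C ^ 2)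
  have hQ0 : 0 < Q := by positivity
  refine ⟨c / (2 * (γ + 1)), by positivity, 2 * K + m + c / 2 + c / (2 * (γ + 1)), by positivity,
    c / (2 * Q), by positivity, fun h hh hle x v => ?_⟩
  have first_order := lyapunov_drift_le (v := v) hm hγ (hF x) (hFx x)
  have second_order : h * lyapunov γ v (-(F x + γ • v)) ≤ c / 2 * (‖x‖ ^ 2 + ‖v‖ ^ 2 + 1) :=
    calc h * lyapunov γ v (-(F x + γ • v)) ≤ c / (2 * Q) * (Q * (‖x‖ ^ 2 + ‖v‖ ^ 2 + 1)) :=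
          mul_le_mul hle (lyapunov_second_order_le hγ1 (hF x)) (lyapunov_nonneg hγ1 _ _)
            (by positivity)
      _ = _ := by field_simp
  have coercive : c / (2 * (γ + 1)) * lyapunov γ x v ≤ c / 2 * (‖x‖ ^ 2 + ‖v‖ ^ 2) :=
    calc _ ≤ c / (2 * (γ + 1)) * ((γ + 1) * (‖x‖ ^ 2 + ‖v‖ ^ 2)) := by
          gcongr; exact lyapunov_le hγ1 x v
      _ = _ := by field_simp
  rw [lyapunov_noiseless_step]
  linarith [mul_le_mul_of_nonneg_left
    (add_le_add (add_le_add first_order second_order) coercive) hh]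

end Lyapunov

section Noise

lemma integrable_one_add_norm_rpow {α E : Type*} [MeasurableSpace α] {μ : Measure α}
    [IsFiniteMeasure μ] [NormedAddCommGroup E] {f : α → E} {p : ℝ} (hp : 0 < p)
    (hf : MemLp f (ENNReal.ofReal p) μ) : Integrable (fun a => (1 + ‖f a‖) ^ p) μ := by
  have := ((memLp_const (1 : ℝ)).add hf.norm).integrable_norm_rpow (by simpa using hp) (by simp)
  refine this.congr (.of_forall fun a => ?_)
  simp only [Pi.add_apply, ENNReal.toReal_ofReal hp.le,
    Real.norm_of_nonneg (by positivity : 0 ≤ 1 + ‖f a‖)]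

variable {E : Type*} [NormedAddCommGroup E] [InnerProductSpace ℝ E]

lemma quadratic_perturbation_nonneg {A : ℝ} {y : E} (hy : ‖y‖ ^ 2 ≤ A) (σ : ℝ) (z : E) :
    0 ≤ A + 2 * σ * ⟪y, z⟫ + σ ^ 2 * ‖z‖ ^ 2 := by
  have := norm_add_sq_real y (σ • z)
  rw [real_inner_smul_right, norm_smul, mul_pow, Real.norm_eq_abs, sq_abs] at this
  linarith [sq_nonneg ‖y + σ • z‖]

lemma abs_two_mul_inner_add_sq_div_le {σ A : ℝ} (hσ : 0 ≤ σ) (hA : 0 < A) {y : E}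
    (hy : ‖y‖ ^ 2 ≤ A) (z : E) :
    |(2 * σ * ⟪y, z⟫ + σ ^ 2 * ‖z‖ ^ 2) / A| ≤ 2 * (σ / √A) * ‖z‖ + (σ / √A) ^ 2 * ‖z‖ ^ 2 := by
  have inner_le : |⟪y, z⟫| ≤ √A * ‖z‖ :=
    (abs_real_inner_le_norm y z).trans (by gcongr; exact Real.le_sqrt_of_sq_le hy)
  calc |(2 * σ * ⟪y, z⟫ + σ ^ 2 * ‖z‖ ^ 2) / A|
      = |2 * σ * ⟪y, z⟫ + σ ^ 2 * ‖z‖ ^ 2| / A := by rw [abs_div, abs_of_pos hA]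
    _ ≤ (2 * σ * (√A * ‖z‖) + σ ^ 2 * ‖z‖ ^ 2) / A := by
        gcongr
        refine (abs_add_le _ _).trans (add_le_add ?_ (abs_of_nonneg (by positivity)).le)
        rw [abs_mul, abs_of_nonneg (by positivity : 0 ≤ 2 * σ)]
        gcongr
    _ = _ := by
        rw [div_pow, Real.sq_sqrt hA.le]
        field_simp
        linear_combination 2 * σ * ‖z‖ * Real.sq_sqrt hA.le

lemma rpow_quadratic_perturbation_le {r σ A : ℝ} (hr : 0 ≤ r) (hσ0 : 0 ≤ σ) (hσ1 : σ ≤ 1)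
    (hA : 1 ≤ A) {y : E} (hy : ‖y‖ ^ 2 ≤ A) (z : E) :
    (A + 2 * σ * ⟪y, z⟫ + σ ^ 2 * ‖z‖ ^ 2) ^ r ≤
      A ^ r * (1 + 2 * r * σ / A * ⟪y, z⟫ +
        (r + r ^ 2) * σ ^ 2 / A * (1 + ‖z‖) ^ (2 * r + 4)) := by
  have hA0 : 0 < A := by linarith
  set δ := (2 * σ * ⟪y, z⟫ + σ ^ 2 * ‖z‖ ^ 2) / A with hδ
  have base_eq : A + 2 * σ * ⟪y, z⟫ + σ ^ 2 * ‖z‖ ^ 2 = A * (1 + δ) := by rw [hδ]; field_simp; ring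
  have base_nonneg : 0 ≤ 1 + δ :=
    nonneg_of_mul_nonneg_right (base_eq ▸ quadratic_perturbation_nonneg hy σ z) hA0
  have remainder_le : |δ| ^ 2 * (1 + |δ|) ^ r ≤ σ ^ 2 / A * (1 + ‖z‖) ^ (2 * r + 4) :=
    calc _ ≤ (σ / √A) ^ 2 * (1 + ‖z‖) ^ (2 * r + 4) :=
          sq_mul_one_add_rpow_le hr (by positivity)
            ((div_le_one₀ (by positivity)).2 (hσ1.trans (Real.one_le_sqrt.2 hA)))
            (norm_nonneg z) (abs_nonneg δ) (abs_two_mul_inner_add_sq_div_le hσ0 hA0 hy z)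
      _ = _ := by rw [div_pow, Real.sq_sqrt hA0.le]
  have norm_sq_le : ‖z‖ ^ 2 ≤ (1 + ‖z‖) ^ (2 * r + 4) :=
    calc ‖z‖ ^ 2 ≤ (1 + ‖z‖) ^ (2 : ℝ) := by rw [Real.rpow_two]; gcongr; linarith
      _ ≤ _ := Real.rpow_le_rpow_of_exponent_le (by linarith [norm_nonneg z]) (by linarith)
  rw [base_eq, Real.mul_rpow hA0.le base_nonneg]
  gcongr
  calc (1 + δ) ^ r ≤ 1 + r * δ + (r * δ) ^ 2 * (1 + |δ|) ^ r :=
        one_add_rpow_le hr (by linarith)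
    _ = 1 + 2 * r * σ / A * ⟪y, z⟫ + r * σ ^ 2 / A * ‖z‖ ^ 2 +
          r ^ 2 * (|δ| ^ 2 * (1 + |δ|) ^ r) := by rw [sq_abs, hδ]; ring
    _ ≤ 1 + 2 * r * σ / A * ⟪y, z⟫ + r * σ ^ 2 / A * (1 + ‖z‖) ^ (2 * r + 4) +
          r ^ 2 * (σ ^ 2 / A * (1 + ‖z‖) ^ (2 * r + 4)) := by gcongr
    _ = _ := by ring

variable [CompleteSpace E] [MeasurableSpace E] {μ : Measure E} [IsProbabilityMeasure μ] {r σ A : ℝ}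

lemma lintegral_rpow_quadratic_perturbation_le (hr : 0 ≤ r) (hσ0 : 0 ≤ σ)
    (hσ1 : σ ≤ 1) (hA : 1 ≤ A) {y : E} (hy : ‖y‖ ^ 2 ≤ A)
    (hμ : MemLp id (ENNReal.ofReal (2 * r + 4)) μ) (hμ0 : ∫ z, z ∂μ = 0) :
    ∫⁻ z, ENNReal.ofReal ((A + 2 * σ * ⟪y, z⟫ + σ ^ 2 * ‖z‖ ^ 2) ^ r) ∂μ ≤
      ENNReal.ofReal (A ^ r *
        (1 + (r + r ^ 2) * (∫ z, (1 + ‖z‖) ^ (2 * r + 4) ∂μ) * σ ^ 2 / A)) := by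
  have integrable_id : Integrable (fun z => z) μ :=
    hμ.integrable (by rw [ENNReal.one_le_ofReal]; linarith)
  have integrable_linear : Integrable (fun z => 1 + 2 * r * σ / A * ⟪y, z⟫) μ :=
    (integrable_const _).add ((integrable_id.const_inner y).const_mul _)
  have integrable_remainder :
      Integrable (fun z => (r + r ^ 2) * σ ^ 2 / A * (1 + ‖z‖) ^ (2 * r + 4)) μ :=
    (integrable_one_add_norm_rpow (by linarith) hμ).const_mul _
  have linear_mean : ∫ z, (1 + 2 * r * σ / A * ⟪y, z⟫) ∂μ = 1 := by
    rw [integral_add (integrable_const _) ((integrable_id.const_inner y).const_mul _),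
      integral_const_mul, integral_inner integrable_id, hμ0]
    simp
  have pointwise := rpow_quadratic_perturbation_le hr hσ0 hσ1 hA hy
  calc ∫⁻ z, ENNReal.ofReal ((A + 2 * σ * ⟪y, z⟫ + σ ^ 2 * ‖z‖ ^ 2) ^ r) ∂μ
      ≤ ∫⁻ z, ENNReal.ofReal (A ^ r * (1 + 2 * r * σ / A * ⟪y, z⟫ +
          (r + r ^ 2) * σ ^ 2 / A * (1 + ‖z‖) ^ (2 * r + 4))) ∂μ := by
        gcongr with z; exact pointwise z
    _ = ENNReal.ofReal (∫ z, A ^ r * (1 + 2 * r * σ / A * ⟪y, z⟫ +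
          (r + r ^ 2) * σ ^ 2 / A * (1 + ‖z‖) ^ (2 * r + 4)) ∂μ) :=
        (ofReal_integral_eq_lintegral_ofReal
          ((integrable_linear.add integrable_remainder).const_mul _)
          (.of_forall fun z => (Real.rpow_nonneg (quadratic_perturbation_nonneg hy σ z) r).trans
            (pointwise z))).symm
    _ = _ := by
        rw [integral_const_mul, integral_add integrable_linear integrable_remainder, linear_mean,
          integral_const_mul]
        congr 3
        ring

lemma lintegral_lyapunov_add_noise_rpow_le {γ : ℝ} {x w : E} (hγ : 1 ≤ γ) (hr : 0 ≤ r)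
    (hσ0 : 0 ≤ σ) (hσ1 : σ ≤ 1) (hA : lyapunov γ x w + 1 ≤ A)
    (hμ : MemLp id (ENNReal.ofReal (2 * r + 4)) μ) (hμ0 : ∫ z, z ∂μ = 0) :
    ∫⁻ z, ENNReal.ofReal ((lyapunov γ x (w + σ • z) + 1) ^ r) ∂μ ≤
      ENNReal.ofReal (A ^ r *
        (1 + (r + r ^ 2) * (∫ z, (1 + ‖z‖) ^ (2 * r + 4) ∂μ) * σ ^ 2 / A)) := by
  have hA1 : 1 ≤ A := by linarith [lyapunov_nonneg hγ x w]
  have norm_sq_le : ‖x + w‖ ^ 2 ≤ A := by linarith [norm_add_sq_le_lyapunov hγ x w]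
  refine le_trans ?_ (lintegral_rpow_quadratic_perturbation_le hr hσ0 hσ1 hA1 norm_sq_le hμ hμ0)
  refine lintegral_mono fun z => ENNReal.ofReal_le_ofReal (Real.rpow_le_rpow ?_ ?_ hr)
  · linarith [lyapunov_nonneg hγ x (w + σ • z)]
  · linarith [lyapunov_add_smul_right γ σ x w z]

end Noise

section EulerMaruyama

variable {E : Type*} [NormedAddCommGroup E] [InnerProductSpace ℝ E] [CompleteSpace E]
  [MeasurableSpace E] {μ : Measure E} [IsProbabilityMeasure μ]

lemma exists_lintegral_lyapunov_step_rpow_le {F : E → E} {C m K r γ : ℝ} (hm : 0 < m)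
    (hF : ∀ x, ‖F x‖ ≤ C * (‖x‖ + 1)) (hFx : ∀ x, m * ‖x‖ ^ 2 - K ≤ ⟪x, F x⟫)
    (hγ : 2 + 2 * C ^ 2 / m ≤ γ) (hr : 0 < r)
    (hμ : MemLp id (ENNReal.ofReal (2 * r + 4)) μ) (hμ0 : ∫ z, z ∂μ = 0) :
    ∃ a > 0, ∃ b > 0, ∃ h₀ > 0, ∀ h, 0 ≤ h → h ≤ h₀ → ∀ x v : E,
      ∫⁻ z, ENNReal.ofReal
          ((lyapunov γ (x + h • v) (v - h • F x - (γ * h) • v + √(2 * γ * h) • z) + 1) ^ r) ∂μ ≤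
        ENNReal.ofReal (Real.exp (-a * h) * (lyapunov γ x v + 1) ^ r + b * h) := by
  have hγ1 : 1 ≤ γ := by linarith [(by positivity : 0 ≤ 2 * C ^ 2 / m)]
  set M := (r + r ^ 2) * ∫ z, (1 + ‖z‖) ^ (2 * r + 4) ∂μ
  have : 0 ≤ M := by positivity
  obtain ⟨a, ha, k, hk, h₁, hh₁, noiseless_step_le⟩ :=
    exists_lyapunov_noiseless_step_le hm hF hFx hγ
  obtain ⟨b, hb, absorb⟩ := exists_rpow_mul_exp_le (c := r * a) (k := r * k + 2 * (2 * γ * M))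
    (by positivity) (by positivity) hr.le
  refine ⟨r * a / 2, by positivity, b, hb, min (min 1 h₁) (min (1 / (2 * a)) (1 / (2 * γ))),
    by positivity, fun h hh hle x v => ?_⟩
  obtain ⟨⟨hh_one, hhh₁⟩, hha, hhγ⟩ : (h ≤ 1 ∧ h ≤ h₁) ∧ h ≤ 1 / (2 * a) ∧ h ≤ 1 / (2 * γ) := by
    simpa only [le_min_iff] using hle
  have hB : 1 ≤ lyapunov γ x v + 1 := by linarith [lyapunov_nonneg hγ1 x v]
  have noise_le_one : √(2 * γ * h) ≤ 1 := by
    rw [Real.sqrt_le_one, mul_comm]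
    exact (le_div_iff₀ (by positivity)).1 hhγ
  have decay_le_half : a * h ≤ 1 / 2 := by
    rw [le_div_iff₀ (by positivity)] at hha
    linarith
  refine (lintegral_lyapunov_add_noise_rpow_le hγ1 hr.le (Real.sqrt_nonneg _) noise_le_one
    (noiseless_step_le h hh hhh₁ x v) hμ hμ0).trans (ENNReal.ofReal_le_ofReal ?_)
  set A := (1 - a * h) * (lyapunov γ x v + 1) + k * h with hA
  calc A ^ r * (1 + M * √(2 * γ * h) ^ 2 / A) = A ^ r * (1 + 2 * γ * M * h / A) := by
        rw [Real.sq_sqrt (by positivity)]; ring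
    _ ≤ _ := rpow_mul_one_add_le_rpow_mul_exp hr.le hk (by positivity) hh decay_le_half
        (by linarith) hA
    _ ≤ _ := absorb h hh hh_one _ hB
    _ = _ := by ring_nf

theorem statement10_general [OpensMeasurableSpace E] {U : E → ℝ} {C₁ m R r : ℝ} (hm : 0 < m)
    (hR : 0 < R) (hU : ContDiff ℝ 2 U) (hU1 : ∀ x, ‖gradient U x‖ ≤ C₁ * (‖x‖ + 1))
    (hconv : ∀ x, R ≤ ‖x‖ → ∀ y, m * ‖y‖ ^ 2 ≤ iteratedFDeriv ℝ 2 U x ![y, y]) (hr : 0 < r)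
    (hμ : MemLp id (ENNReal.ofReal (2 * r + 4)) μ) (hμ0 : ∫ z, z ∂μ = 0) :
    ∃ γ₀ > 0, ∀ γ ≥ γ₀, ∃ a₁ > 0, ∃ b₁ > 0, ∃ h₀ > 0, ∀ h, 0 ≤ h → h ≤ h₀ → ∀ x₀ v₀ : E,
      ∀ {Ω : Type*} [MeasurableSpace Ω] {P : Measure Ω} {ξ : Ω → E}, HasLaw ξ μ P →
        ∫⁻ ω, ENNReal.ofReal ((lyapunov γ (x₀ + h • v₀)
            (v₀ - h • gradient U x₀ - (γ * h) • v₀ + √(2 * γ * h) • ξ ω) + 1) ^ r) ∂P ≤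
          ENNReal.ofReal (Real.exp (-a₁ * h) * (lyapunov γ x₀ v₀ + 1) ^ r + b₁ * h) := by
  obtain ⟨K, dissipative⟩ := exists_mul_norm_sq_sub_le_inner_gradient hU hm hR hU1 hconv
  refine ⟨2 + 2 * C₁ ^ 2 / (m / 2), by positivity, fun γ hγ => ?_⟩
  obtain ⟨a, ha, b, hb, h₀, hh₀, step_le⟩ :=
    exists_lintegral_lyapunov_step_rpow_le (half_pos hm) hU1 dissipative hγ hr hμ hμ0
  refine ⟨a, ha, b, hb, h₀, hh₀, fun h hh hle x v Ω _ P ξ hξ => ?_⟩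
  refine (hξ.lintegral_comp (Measurable.aemeasurable ?_)).trans_le (step_le h hh hle x v)
  refine ((Continuous.measurable ?_).pow_const r).ennreal_ofReal
  unfold lyapunov
  fun_prop

end EulerMaruyama

lemma hasLaw_stdGaussian_of_map_eq_pi {Ω ι : Type*} [MeasurableSpace Ω] [Fintype ι]
    {P : Measure Ω} {ξ : Ω → EuclideanSpace ℝ ι} (hξ : AEMeasurable ξ P)
    (hlaw : P.map (fun ω i => ξ ω i) = Measure.pi fun _ => gaussianReal 0 1) :
    HasLaw ξ (stdGaussian (EuclideanSpace ℝ ι)) P where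
  aemeasurable := hξ
  map_eq := by
    rw [← map_pi_eq_stdGaussian, ← hlaw, AEMeasurable.map_map_of_aemeasurable (by fun_prop)
      (by fun_prop)]
    rfl

/-- one-step Lyapunov inequality `E[H_r(x₁,v₁)] ≤ e^{−a₁h}H_r(x₀,v₀) + b₁h`
for the Euler–Maruyama update of the underdamped Langevin dynamics, under A1 and A2, where
`H_r(x,v) = (γ|x|² + 2⟨x,v⟩ + |v|² + 1)^r`. -/
theorem statement10 (d : ℕ) (hd : 1 ≤ d) (U : EuclideanSpace ℝ (Fin d) → ℝ)
    (C₁ m R : ℝ) (hC₁ : 0 < C₁) (hm : 0 < m) (hR : 0 < R)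
    -- A1
    (hU : ContDiff ℝ 3 U)
    (hU0 : ∀ x, |U x| ≤ C₁ * (‖x‖ + 1) ^ 2)
    (hU1 : ∀ x, ‖gradient U x‖ ≤ C₁ * (‖x‖ + 1))
    (hU2 : ∀ x, ‖iteratedFDeriv ℝ 2 U x‖ ≤ C₁)
    (hU3 : ∀ x, ‖iteratedFDeriv ℝ 3 U x‖ ≤ C₁)
    -- A2
    (hconv : ∀ x, R ≤ ‖x‖ → ∀ y, m * ‖y‖ ^ 2 ≤ iteratedFDeriv ℝ 2 U x ![y, y])
    (r : ℝ) (hr : 1 ≤ r) :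
    ∃ γ₀ > (0 : ℝ), ∀ γ ≥ γ₀, ∃ a₁ > (0 : ℝ), ∃ b₁ > (0 : ℝ), ∃ h₀ > (0 : ℝ),
      ∀ h : ℝ, 0 < h → h ≤ h₀ →
      ∀ x₀ v₀ : EuclideanSpace ℝ (Fin d),
      ∀ (Ω : Type) (_ : MeasurableSpace Ω) (P : Measure Ω), IsProbabilityMeasure P →
      ∀ ξ : Ω → EuclideanSpace ℝ (Fin d), Measurable ξ →
        -- ξ is a standard Gaussian random vector in ℝ^d
        (Measure.map (fun ω i => ξ ω i) P = Measure.pi fun _ : Fin d => gaussianReal 0 1) →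
        (∫⁻ ω, ENNReal.ofReal
            ((γ * ‖x₀ + h • v₀‖ ^ 2 +
              2 * ⟪x₀ + h • v₀,
                    v₀ - h • gradient U x₀ - (γ * h) • v₀ + Real.sqrt (2 * γ * h) • ξ ω⟫ +
              ‖v₀ - h • gradient U x₀ - (γ * h) • v₀ + Real.sqrt (2 * γ * h) • ξ ω‖ ^ 2 +
              1) ^ r) ∂P) ≤
          ENNReal.ofReal (Real.exp (-a₁ * h) *
              (γ * ‖x₀‖ ^ 2 + 2 * ⟪x₀, v₀⟫ + ‖v₀‖ ^ 2 + 1) ^ r + b₁ * h) := by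
  obtain ⟨γ₀, hγ₀, contraction⟩ := statement10_general hm hR (hU.of_le (by norm_num)) hU1 hconv
    (zero_lt_one.trans_le hr) (IsGaussian.memLp_id (stdGaussian _) _ ENNReal.ofReal_ne_top)
    integral_id_stdGaussian
  refine ⟨γ₀, hγ₀, fun γ hγ => ?_⟩
  obtain ⟨a, ha, b, hb, h₀, hh₀, step_le⟩ := contraction γ hγ
  exact ⟨a, ha, b, hb, h₀, hh₀, fun h hh hle x v _ _ _ _ _ hξ hlaw =>
    step_le h hh.le hle x v (hasLaw_stdGaussian_of_map_eq_pi hξ.aemeasurable hlaw)⟩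
end

section
/- Assume A1, A2 and A4, and fix r ≥ 1. Consider the stochastic gradient Euler–Maruyama chain (X̃_n,Ṽ_n) with time step h and damping rate γ, started from initial data with E(|X̃₀|+|Ṽ₀|+1)^{2r} < ∞. There exists γ₀ > 0 such that whenever γ ≥ γ₀, there exist constants C, h₀ > 0 (depending on r, γ, m, R, C₀, C₁, d but not on h or n) such that for every 0 < h ≤ h₀: sup_{n≥0} E(|X̃_n|+|Ṽ_n|+1)^{2r} ≤ C·E(|X̃₀|+|Ṽ₀|+1)^{2r}. -/
open MeasureTheory ProbabilityTheory RealInnerProductSpace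
open scoped ENNReal

/-!
Friction cancels in the combination `γ x + v`, so `G = 1 + |γ x + v|² + |v|²` is a Lyapunov
function: for `γ` large compared with `C₁ / √m`, dissipativity of the gradient estimate gives
`G' ≤ G + h (-l G + K (1 + |ξ|)²) + ⟪p, ξ⟫` in one step, with `|p| = O(√(h G))`.
By Bernoulli's inequality `G' ^ r` is at most `G ^ r` times an expansion to second order in the
relative increment. Integrating the noise kills the linear term, and the quadratic one is only
`O(h² + h / G)`, which the decay absorbs once `G` is large. Hence
`E G' ^ r ≤ (1 - α h) G ^ r + α h M` with `α` and `M` independent of `h`, for every value of the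
gradient estimate. As each noise vector is independent of the current state and gradient sample,
this iterates to a bound uniform in time.
-/

section RpowExpansion

lemma one_add_pow_le_one_add_mul_add {t : ℝ} (ht : -1 ≤ t) (k : ℕ) :
    (1 + t) ^ k ≤ 1 + k * t + k ^ 2 * (t ^ 2 * (1 + |t|) ^ k) := by
  induction k with
  | zero => simp
  | succ k ih =>
    set ρ := t ^ 2 * (1 + |t|) ^ (k + 1) with hρ
    have hρ_step : t ^ 2 * (1 + |t|) ^ k * (1 + t) ≤ ρ := by
      rw [hρ, pow_succ (1 + |t|), ← mul_assoc]
      gcongr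
      exact le_abs_self t
    have hsq : t ^ 2 ≤ ρ :=
      le_mul_of_one_le_right (sq_nonneg t) (one_le_pow₀ (by linarith [abs_nonneg t]))
    calc (1 + t) ^ (k + 1)
        ≤ (1 + k * t + k ^ 2 * (t ^ 2 * (1 + |t|) ^ k)) * (1 + t) := by
          rw [pow_succ]
          exact mul_le_mul_of_nonneg_right ih (by linarith)
      _ = 1 + (k + 1) * t + (k * t ^ 2 + k ^ 2 * (t ^ 2 * (1 + |t|) ^ k * (1 + t))) := by ring
      _ ≤ 1 + (k + 1) * t + (k * ρ + k ^ 2 * ρ) := by gcongr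
      _ ≤ 1 + ↑(k + 1) * t + ↑(k + 1) ^ 2 * ρ := by
          push_cast
          nlinarith [(sq_nonneg t).trans hsq, mul_nonneg k.cast_nonneg ((sq_nonneg t).trans hsq)]

lemma one_add_rpow_le_one_add_mul_add {r t : ℝ} {k : ℕ} (hr : 0 < r) (hrk : r ≤ k)
    (ht : -1 ≤ t) :
    (1 + t) ^ r ≤ 1 + r * t + r * k * (t ^ 2 * (1 + |t|) ^ k) := by
  have hk : (0 : ℝ) < k := hr.trans_le hrk
  have h1t : 0 ≤ 1 + t := by linarith
  calc (1 + t) ^ r = (1 + ((1 + t) ^ k - 1)) ^ (r / k) := by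
        rw [add_sub_cancel, ← Real.rpow_natCast_mul h1t, mul_div_cancel₀ r hk.ne']
    _ ≤ 1 + r / k * ((1 + t) ^ k - 1) :=
        rpow_one_add_le_one_add_mul_self (by linarith [pow_nonneg h1t k]) (by positivity)
          ((div_le_one hk).2 hrk)
    _ ≤ 1 + r / k * (1 + k * t + k ^ 2 * (t ^ 2 * (1 + |t|) ^ k) - 1) := by
        gcongr
        exact one_add_pow_le_one_add_mul_add ht k
    _ = 1 + r * t + r * k * (t ^ 2 * (1 + |t|) ^ k) := by
        field_simp
        ring

lemma abs_relativeIncrement_le {h G l K c ψ q : ℝ} (hh : 0 ≤ h) (hh1 : h ≤ 1) (hG : 1 ≤ G)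
    (hl : 0 ≤ l) (hK : 0 ≤ K) (hc : 0 ≤ c) (hψ : 1 ≤ ψ) (hq : |q| ≤ c * √(h * G) * ψ) :
    |h * (-l + K * ψ ^ 2 / G) + q / G| ≤ (l + K + c) * ψ ^ 2 * (h + √(h / G)) := by
  have hG0 : 0 < G := by linarith
  set u := √(h / G) with hu
  have hu0 : 0 ≤ u := Real.sqrt_nonneg _
  have hu1 : u ≤ 1 := Real.sqrt_le_one.2 ((div_le_one hG0).2 (hh1.trans hG))
  have huu : h / G = u ^ 2 := (Real.sq_sqrt (by positivity)).symm
  have hsqrt : √(h * G) = u * G := by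
    rw [hu, ← Real.sqrt_sq hG0.le, ← Real.sqrt_mul (by positivity), Real.sqrt_sq hG0.le]
    congr 1
    field_simp
  have hψ2 : 1 ≤ ψ ^ 2 := one_le_pow₀ hψ
  have hdecay : l * h ≤ l * ψ ^ 2 * h := by
    have := mul_le_mul_of_nonneg_left hψ2 (mul_nonneg hl hh)
    linarith
  have hgrowth : K * ψ ^ 2 * u ^ 2 ≤ K * ψ ^ 2 * u := by
    gcongr
    exact pow_le_of_le_one hu0 hu1 two_ne_zero
  have hnoise : |q / G| ≤ c * ψ ^ 2 * u := by
    rw [abs_div, abs_of_pos hG0, div_le_iff₀ hG0]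
    calc |q| ≤ c * √(h * G) * ψ := hq
      _ ≤ c * √(h * G) * ψ ^ 2 := by gcongr; exact le_self_pow₀ hψ two_ne_zero
      _ = c * ψ ^ 2 * u * G := by rw [hsqrt]; ring
  calc |h * (-l + K * ψ ^ 2 / G) + q / G|
      = |-(l * h) + K * ψ ^ 2 * u ^ 2 + q / G| := by rw [← huu]; ring_nf
    _ ≤ l * h + K * ψ ^ 2 * u ^ 2 + |q / G| := by
        refine (abs_add_three _ _ _).trans_eq ?_
        rw [abs_neg, abs_of_nonneg (by positivity : 0 ≤ l * h),
          abs_of_nonneg (by positivity : 0 ≤ K * ψ ^ 2 * u ^ 2)]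
    _ ≤ l * ψ ^ 2 * h + K * ψ ^ 2 * u + c * ψ ^ 2 * u := by gcongr
    _ ≤ (l + K + c) * ψ ^ 2 * (h + u) := by
        have : 0 ≤ l * ψ ^ 2 * u + (K + c) * ψ ^ 2 * h := by positivity
        linarith

lemma sq_mul_one_add_abs_pow_le {t B ψ h u : ℝ} (hB : 0 ≤ B) (hψ : 1 ≤ ψ)
    (hh1 : h ≤ 1) (hu1 : u ≤ 1) (ht : |t| ≤ B * ψ ^ 2 * (h + u)) (k : ℕ) :
    t ^ 2 * (1 + |t|) ^ k ≤
      2 * B ^ 2 * (1 + 2 * B) ^ k * (h ^ 2 + u ^ 2) * ψ ^ (2 * k + 4) := by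
  have hsq : t ^ 2 ≤ B ^ 2 * ψ ^ 4 * (2 * (h ^ 2 + u ^ 2)) := by
    calc t ^ 2 = |t| ^ 2 := (sq_abs t).symm
      _ ≤ (B * ψ ^ 2 * (h + u)) ^ 2 := by gcongr
      _ = B ^ 2 * ψ ^ 4 * (h + u) ^ 2 := by ring
      _ ≤ B ^ 2 * ψ ^ 4 * (2 * (h ^ 2 + u ^ 2)) := by gcongr; exact add_sq_le
  have hone : 1 + |t| ≤ (1 + 2 * B) * ψ ^ 2 := by
    have : B * ψ ^ 2 * (h + u) ≤ B * ψ ^ 2 * (1 + 1) := by gcongr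
    linarith [one_le_pow₀ hψ (n := 2)]
  calc t ^ 2 * (1 + |t|) ^ k
      ≤ B ^ 2 * ψ ^ 4 * (2 * (h ^ 2 + u ^ 2)) * ((1 + 2 * B) * ψ ^ 2) ^ k := by gcongr
    _ = 2 * B ^ 2 * (1 + 2 * B) ^ k * (h ^ 2 + u ^ 2) * ψ ^ (2 * k + 4) := by
        rw [mul_pow, ← pow_mul, pow_add]
        ring

/-- The constant in front of the error term of the expansion `rpow_le_of_le_add_drift`. -/
noncomputable def rpowErrorConst (r K B : ℝ) (k : ℕ) : ℝ :=
  r * K + r * k * (2 * B ^ 2 * (1 + 2 * B) ^ k)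

lemma rpow_le_of_le_add_drift {r h G l K c ψ q g : ℝ} {k : ℕ} (hr : 0 < r) (hrk : r ≤ k)
    (hh : 0 ≤ h) (hh1 : h ≤ 1) (hG : 1 ≤ G) (hl : 0 ≤ l) (hK : 0 ≤ K) (hc : 0 ≤ c)
    (hψ : 1 ≤ ψ) (hq : |q| ≤ c * √(h * G) * ψ) (hg0 : 0 ≤ g)
    (hg : g ≤ G + h * (-l * G + K * ψ ^ 2) + q) :
    g ^ r ≤ G ^ r * (1 - r * l * h + r / G * q
      + rpowErrorConst r K (l + K + c) k * (h ^ 2 + h / G) * ψ ^ (2 * k + 4)) := by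
  have hG0 : 0 < G := by linarith
  set B := l + K + c
  set t := h * (-l + K * ψ ^ 2 / G) + q / G with ht
  have hgt : g ≤ G * (1 + t) := by
    convert hg using 1
    rw [ht]
    field_simp
    ring
  have h1t : 0 ≤ 1 + t := nonneg_of_mul_nonneg_right (hg0.trans hgt) hG0
  have hquad := sq_mul_one_add_abs_pow_le (by positivity : 0 ≤ B) hψ hh1
    (Real.sqrt_le_one.2 ((div_le_one hG0).2 (hh1.trans hG)))
    (abs_relativeIncrement_le hh hh1 hG hl hK hc hψ hq) k
  rw [Real.sq_sqrt (by positivity)] at hquad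
  have hlinear : h * (K * ψ ^ 2 / G) ≤ K * (h ^ 2 + h / G) * ψ ^ (2 * k + 4) := by
    calc h * (K * ψ ^ 2 / G) = K * (h / G) * ψ ^ 2 := by ring
      _ ≤ K * (h ^ 2 + h / G) * ψ ^ (2 * k + 4) := by
          gcongr
          · linarith [sq_nonneg h]
          · omega
  calc g ^ r ≤ (G * (1 + t)) ^ r := Real.rpow_le_rpow hg0 hgt hr.le
    _ = G ^ r * (1 + t) ^ r := Real.mul_rpow hG0.le h1t
    _ ≤ G ^ r * (1 + r * t + r * k * (t ^ 2 * (1 + |t|) ^ k)) := by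
        gcongr
        exact one_add_rpow_le_one_add_mul_add hr hrk (by linarith)
    _ = G ^ r * (1 - r * l * h + r / G * q
          + (r * (h * (K * ψ ^ 2 / G)) + r * k * (t ^ 2 * (1 + |t|) ^ k))) := by
        rw [ht]
        ring
    _ ≤ G ^ r * (1 - r * l * h + r / G * q
          + (r * (K * (h ^ 2 + h / G) * ψ ^ (2 * k + 4))
            + r * k * (2 * B ^ 2 * (1 + 2 * B) ^ k * (h ^ 2 + h / G) * ψ ^ (2 * k + 4)))) := by
        gcongr
    _ = _ := by
        rw [rpowErrorConst]
        ring

/-- The error `D / G` is absorbed by the decay when `G` is large, and `G` is bounded otherwise. -/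
lemma rpow_mul_one_sub_add_le {r lam D h G : ℝ} (hr : 0 < r) (hlam : 0 < lam) (hD : 0 ≤ D)
    (hh : 0 ≤ h) (hDh : D * h ≤ lam / 2) (hG : 1 ≤ G) :
    G ^ r * (1 - lam * h + D * (h ^ 2 + h / G)) ≤
      (1 - lam / 4 * h) * G ^ r + lam / 4 * h * (1 + 4 * D / lam) ^ (r + 1) := by
  have hG0 : 0 < G := by linarith
  set T := 1 + 4 * D / lam with hT
  have hT0 : 0 < T := by positivity
  have hDT : D ≤ lam / 4 * T := by
    have : lam / 4 * T = lam / 4 + D := by rw [hT]; field_simp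
    linarith
  have herror : G ^ r * (D / G) ≤ lam / 4 * G ^ r + lam / 4 * T ^ (r + 1) := by
    rcases le_total T G with hTG | hGT
    · have hDG : D / G ≤ lam / 4 := by
        rw [div_le_iff₀ hG0]
        exact hDT.trans (by gcongr)
      calc G ^ r * (D / G) ≤ G ^ r * (lam / 4) := by gcongr
        _ ≤ lam / 4 * G ^ r + lam / 4 * T ^ (r + 1) := by
            rw [mul_comm]
            exact le_add_of_nonneg_right (by positivity)
    · calc G ^ r * (D / G) ≤ T ^ r * (lam / 4 * T) := by
            gcongr
            exact (div_le_self hD hG).trans hDT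
        _ = lam / 4 * T ^ (r + 1) := by
            rw [Real.rpow_add_one hT0.ne']
            ring
        _ ≤ lam / 4 * G ^ r + lam / 4 * T ^ (r + 1) :=
            le_add_of_nonneg_left (by positivity)
  calc G ^ r * (1 - lam * h + D * (h ^ 2 + h / G))
      = G ^ r - lam * h * G ^ r + G ^ r * h * (D * h) + h * (G ^ r * (D / G)) := by ring
    _ ≤ G ^ r - lam * h * G ^ r + G ^ r * h * (lam / 2)
          + h * (lam / 4 * G ^ r + lam / 4 * T ^ (r + 1)) := by gcongr
    _ = (1 - lam / 4 * h) * G ^ r + lam / 4 * h * T ^ (r + 1) := by ring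

end RpowExpansion

section MomentContraction

lemma integrable_one_add_norm_pow {E : Type*} [NormedAddCommGroup E] [MeasurableSpace E]
    {ν : Measure E} [IsFiniteMeasure ν] {N : ℕ} (hmom : MemLp id N ν) :
    Integrable (fun ξ : E => (1 + ‖ξ‖) ^ N) ν := by
  refine ((memLp_const (1 : ℝ)).add hmom.norm).integrable_norm_pow'.congr (.of_forall ?_)
  intro ξ
  simp only [Pi.add_apply, id_eq, Real.norm_of_nonneg (by positivity : 0 ≤ 1 + ‖ξ‖)]

variable {E : Type*} [NormedAddCommGroup E] [InnerProductSpace ℝ E] [CompleteSpace E]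
  [MeasurableSpace E] {ν : Measure E} [IsProbabilityMeasure ν]

lemma lintegral_rpow_le_of_le_add_drift (hmom : ∀ N : ℕ, MemLp id N ν)
    (hmean : ∫ ξ, ξ ∂ν = 0) {r h G l K c : ℝ} {k : ℕ} {p : E} {f : E → ℝ} (hr : 0 < r)
    (hrk : r ≤ k) (hh : 0 ≤ h) (hh1 : h ≤ 1) (hG : 1 ≤ G) (hl : 0 ≤ l) (hK : 0 ≤ K)
    (hc : 0 ≤ c) (hp : ‖p‖ ≤ c * √(h * G)) (hf0 : ∀ ξ, 0 ≤ f ξ)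
    (hf : ∀ ξ, f ξ ≤ G + h * (-l * G + K * (1 + ‖ξ‖) ^ 2) + ⟪p, ξ⟫) :
    ∫⁻ ξ, ENNReal.ofReal (f ξ ^ r) ∂ν ≤ ENNReal.ofReal (G ^ r * (1 - r * l * h
      + (rpowErrorConst r K (l + K + c) k * ∫ ξ, (1 + ‖ξ‖) ^ (2 * k + 4) ∂ν)
        * (h ^ 2 + h / G))) := by
  set D := rpowErrorConst r K (l + K + c) k
  have hid : Integrable (id : E → E) ν := memLp_one_iff_integrable.1 (by simpa using hmom 1)
  have hinner : ∫ ξ, ⟪p, ξ⟫ ∂ν = 0 := by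
    rw [integral_inner (f := fun ξ => ξ) hid, hmean, inner_zero_right]
  have hlin : Integrable (fun ξ : E => r / G * ⟪p, ξ⟫) ν := (hid.const_inner p).const_mul _
  have haff : Integrable (fun ξ : E => 1 - r * l * h + r / G * ⟪p, ξ⟫) ν :=
    (integrable_const _).add hlin
  have herr : Integrable (fun ξ : E => D * (h ^ 2 + h / G) * (1 + ‖ξ‖) ^ (2 * k + 4)) ν :=
    (integrable_one_add_norm_pow (hmom _)).const_mul _
  have hbound : ∀ ξ, f ξ ^ r ≤ G ^ r * (1 - r * l * h + r / G * ⟪p, ξ⟫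
      + D * (h ^ 2 + h / G) * (1 + ‖ξ‖) ^ (2 * k + 4)) := fun ξ => by
    refine rpow_le_of_le_add_drift hr hrk hh hh1 hG hl hK hc (by simp) ?_ (hf0 ξ) (hf ξ)
    calc |⟪p, ξ⟫| ≤ ‖p‖ * ‖ξ‖ := abs_real_inner_le_norm p ξ
      _ ≤ c * √(h * G) * (1 + ‖ξ‖) := by gcongr; linarith
  calc ∫⁻ ξ, ENNReal.ofReal (f ξ ^ r) ∂ν
      ≤ ∫⁻ ξ, ENNReal.ofReal (G ^ r * (1 - r * l * h + r / G * ⟪p, ξ⟫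
          + D * (h ^ 2 + h / G) * (1 + ‖ξ‖) ^ (2 * k + 4))) ∂ν :=
        lintegral_mono fun ξ => ENNReal.ofReal_le_ofReal (hbound ξ)
    _ = ENNReal.ofReal (∫ ξ, G ^ r * (1 - r * l * h + r / G * ⟪p, ξ⟫
          + D * (h ^ 2 + h / G) * (1 + ‖ξ‖) ^ (2 * k + 4)) ∂ν) :=
        (ofReal_integral_eq_lintegral_ofReal ((haff.add herr).const_mul _)
          (.of_forall fun ξ => (Real.rpow_nonneg (hf0 ξ) r).trans (hbound ξ))).symm
    _ = _ := by
        rw [integral_const_mul, integral_add haff herr, integral_add (integrable_const _) hlin,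
          integral_const_mul, integral_const_mul, hinner, integral_const, probReal_univ, one_smul]
        congr 1
        ring

theorem exists_lintegral_rpow_contraction (hmom : ∀ N : ℕ, MemLp id N ν)
    (hmean : ∫ ξ, ξ ∂ν = 0) {r l K c : ℝ} (hr : 0 < r) (hl : 0 < l) (hK : 0 ≤ K)
    (hc : 0 ≤ c) :
    ∃ α > (0 : ℝ), ∃ M ≥ (0 : ℝ), ∃ h₀ > (0 : ℝ), ∀ h, 0 < h → h ≤ h₀ → α * h ≤ 1 ∧
      ∀ (G : ℝ) (p : E) (f : E → ℝ), 1 ≤ G → ‖p‖ ≤ c * √(h * G) → (∀ ξ, 0 ≤ f ξ) →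
        (∀ ξ, f ξ ≤ G + h * (-l * G + K * (1 + ‖ξ‖) ^ 2) + ⟪p, ξ⟫) →
        ∫⁻ ξ, ENNReal.ofReal (f ξ ^ r) ∂ν ≤
          ENNReal.ofReal (1 - α * h) * ENNReal.ofReal (G ^ r) + ENNReal.ofReal (α * h * M) := by
  obtain ⟨k, hrk⟩ := exists_nat_ge r
  set D := rpowErrorConst r K (l + K + c) k * ∫ ξ, (1 + ‖ξ‖) ^ (2 * k + 4) ∂ν
  have hD : 0 ≤ D := mul_nonneg (by unfold rpowErrorConst; positivity)
    (integral_nonneg fun ξ => by positivity)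
  set lam := r * l
  have hlam0 : 0 < lam := by positivity
  refine ⟨lam / 4, by positivity, (1 + 4 * D / lam) ^ (r + 1), by positivity,
    min 1 (min (lam / (2 * (D + 1))) (4 / lam)), by positivity, fun h hh hle => ?_⟩
  obtain ⟨hh1, hhD, hhlam⟩ : h ≤ 1 ∧ h * (2 * (D + 1)) ≤ lam ∧ h * lam ≤ 4 := by
    simpa only [le_min_iff, le_div_iff₀ hlam0, le_div_iff₀ (by positivity : 0 < 2 * (D + 1))]
      using hle
  have hαh : lam / 4 * h ≤ 1 := by linarith
  refine ⟨hαh, fun G p f hG hp hf0 hf => ?_⟩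
  have hGr : 0 ≤ G ^ r := Real.rpow_nonneg (by linarith) r
  have hdecay : 0 ≤ 1 - lam / 4 * h := by linarith
  calc ∫⁻ ξ, ENNReal.ofReal (f ξ ^ r) ∂ν
      ≤ ENNReal.ofReal (G ^ r * (1 - lam * h + D * (h ^ 2 + h / G))) :=
        lintegral_rpow_le_of_le_add_drift hmom hmean hr hrk hh.le hh1 hG hl.le hK hc hp hf0 hf
    _ ≤ ENNReal.ofReal ((1 - lam / 4 * h) * G ^ r
          + lam / 4 * h * (1 + 4 * D / lam) ^ (r + 1)) :=
        ENNReal.ofReal_le_ofReal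
          (rpow_mul_one_sub_add_le hr hlam0 hD hh.le (by linarith) hG)
    _ = _ := by
        rw [ENNReal.ofReal_add (mul_nonneg hdecay hGr) (by positivity),
          ENNReal.ofReal_mul hdecay]

end MomentContraction

section RandomRecursion

variable {𝓢 𝓦 𝓝 Ω : Type*} [MeasurableSpace 𝓢] [MeasurableSpace 𝓦] [MeasurableSpace 𝓝]
  {F : 𝓢 → 𝓦 → 𝓝 → 𝓢} {S : ℕ → Ω → 𝓢} {w : ℕ → Ω → 𝓦} {ξ : ℕ → Ω → 𝓝}

lemma measurable_randomRecursion [MeasurableSpace Ω]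
    (hF : Measurable fun q : (𝓢 × 𝓦) × 𝓝 => F q.1.1 q.1.2 q.2)
    (hS : ∀ n ω, S (n + 1) ω = F (S n ω) (w n ω) (ξ n ω)) (hS0 : Measurable (S 0)) (n : ℕ)
    (hw : ∀ i < n, Measurable (w i)) (hξ : ∀ i < n, Measurable (ξ i)) : Measurable (S n) := by
  induction n with
  | zero => exact hS0
  | succ n ih =>
    rw [funext (hS n)]
    have hSn := ih (fun i hi => hw i (by omega)) fun i hi => hξ i (by omega)
    exact hF.comp ((hSn.prodMk (hw n n.lt_succ_self)).prodMk (hξ n n.lt_succ_self))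

lemma indepFun_randomRecursion [mΩ : MeasurableSpace Ω] {P : Measure Ω}
    (hF : Measurable fun q : (𝓢 × 𝓦) × 𝓝 => F q.1.1 q.1.2 q.2)
    (hS : ∀ n ω, S (n + 1) ω = F (S n ω) (w n ω) (ξ n ω)) (hS0 : Measurable (S 0))
    (hw : ∀ n, Measurable (w n)) (hξ : ∀ n, Measurable (ξ n))
    (hind : iIndep (fun i : Option (ℕ ⊕ ℕ) =>
      Option.elim i (MeasurableSpace.comap (S 0) inferInstance)
        (Sum.elim (fun n => MeasurableSpace.comap (ξ n) inferInstance)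
          fun n => MeasurableSpace.comap (w n) inferInstance)) P) (n : ℕ) :
    IndepFun (fun ω => (S n ω, w n ω)) (ξ n) P := by
  set 𝓕 : Option (ℕ ⊕ ℕ) → MeasurableSpace Ω := fun i =>
    Option.elim i (MeasurableSpace.comap (S 0) inferInstance)
      (Sum.elim (fun n => MeasurableSpace.comap (ξ n) inferInstance)
        fun n => MeasurableSpace.comap (w n) inferInstance)
  have h𝓕 : ∀ i, 𝓕 i ≤ mΩ := by
    rintro (_ | n | n)
    exacts [hS0.comap_le, (hξ n).comap_le, (hw n).comap_le]
  set noise : Option (ℕ ⊕ ℕ) := some (Sum.inl n)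
  set 𝓖 : MeasurableSpace Ω := ⨆ i ∈ ({noise}ᶜ : Set (Option (ℕ ⊕ ℕ))), 𝓕 i
  have hindep : Indep 𝓖 (𝓕 noise) P := by
    simpa only [Set.mem_singleton_iff, iSup_iSup_eq_left] using
      indep_iSup_of_disjoint h𝓕 hind disjoint_compl_left (T := {noise})
  have hle : ∀ i, i ≠ noise → 𝓕 i ≤ 𝓖 := fun i hi => le_biSup 𝓕 hi
  have hw' : ∀ i, Measurable[𝓖] (w i) := fun i =>
    (comap_measurable (w i)).mono (hle (some (Sum.inr i)) (by simp [noise])) le_rfl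
  have hξ' : ∀ i < n, Measurable[𝓖] (ξ i) :=
    fun i hi => (comap_measurable (ξ i)).mono
      (hle (some (Sum.inl i)) (by simp [noise, hi.ne])) le_rfl
  have hS' : Measurable[𝓖] (S n) :=
    @measurable_randomRecursion _ _ _ _ _ _ _ _ _ _ _ (_) hF hS
      ((comap_measurable (S 0)).mono (hle none (by simp [noise])) le_rfl) n
      (fun i _ => hw' i) hξ'
  rw [IndepFun_iff_Indep]
  exact indep_of_indep_of_le_left hindep (Measurable.prodMk hS' (hw' n)).comap_le

lemma lintegral_comp_prodMk_of_indepFun [MeasurableSpace Ω] {P : Measure Ω}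
    [IsFiniteMeasure P] {Z : Ω → 𝓢} {Y : Ω → 𝓝} {Φ : 𝓢 × 𝓝 → ℝ≥0∞} (hΦ : Measurable Φ)
    (hZ : Measurable Z) (hY : Measurable Y) (hZY : IndepFun Z Y P) :
    ∫⁻ ω, Φ (Z ω, Y ω) ∂P = ∫⁻ ω, ∫⁻ y, Φ (Z ω, y) ∂(P.map Y) ∂P := by
  rw [← lintegral_map hΦ (hZ.prodMk hY),
    (indepFun_iff_map_prod_eq_prod_map_map hZ.aemeasurable hY.aemeasurable).1 hZY,
    lintegral_prod _ hΦ.aemeasurable, lintegral_map hΦ.lintegral_prod_right' hZ]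

lemma le_mul_of_le_contraction {a : ℕ → ℝ≥0∞} {θ M : ℝ} (hθ : 0 ≤ θ) (hθ1 : θ ≤ 1)
    (hM : 0 ≤ M) (ha : 1 ≤ a 0)
    (hstep : ∀ n, a (n + 1) ≤ ENNReal.ofReal (1 - θ) * a n + ENNReal.ofReal (θ * M)) (n : ℕ) :
    a n ≤ ENNReal.ofReal (1 + M) * a 0 := by
  have hθ' : 0 ≤ 1 - θ := by linarith
  induction n with
  | zero => exact le_mul_of_one_le_left zero_le (ENNReal.one_le_ofReal.2 (by linarith))
  | succ n ih =>
    calc a (n + 1) ≤ ENNReal.ofReal (1 - θ) * a n + ENNReal.ofReal (θ * M) := hstep n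
      _ ≤ ENNReal.ofReal (1 - θ) * (ENNReal.ofReal (1 + M) * a 0)
            + ENNReal.ofReal (θ * M) * a 0 := by
          gcongr
          exact le_mul_of_one_le_right zero_le ha
      _ = ENNReal.ofReal ((1 - θ) * (1 + M) + θ * M) * a 0 := by
          rw [ENNReal.ofReal_add (p := (1 - θ) * (1 + M)) (by positivity) (by positivity),
            ENNReal.ofReal_mul hθ']
          ring
      _ = ENNReal.ofReal (1 + M - θ) * a 0 := by ring_nf
      _ ≤ ENNReal.ofReal (1 + M) * a 0 := by
          gcongr
          exact sub_le_self _ hθ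

theorem lintegral_randomRecursion_le [MeasurableSpace Ω] {P : Measure Ω}
    [IsProbabilityMeasure P] {ν : Measure 𝓝}
    (hF : Measurable fun q : (𝓢 × 𝓦) × 𝓝 => F q.1.1 q.1.2 q.2)
    (hS : ∀ n ω, S (n + 1) ω = F (S n ω) (w n ω) (ξ n ω)) (hS0 : Measurable (S 0))
    (hw : ∀ n, Measurable (w n)) (hξ : ∀ n, Measurable (ξ n)) (hlaw : ∀ n, P.map (ξ n) = ν)
    (hind : ∀ n, IndepFun (fun ω => (S n ω, w n ω)) (ξ n) P)
    {W : 𝓢 → ℝ≥0∞} (hW : Measurable W) (hW1 : ∀ s, 1 ≤ W s) {θ M : ℝ} (hθ : 0 ≤ θ)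
    (hθ1 : θ ≤ 1) (hM : 0 ≤ M)
    (hdrift : ∀ s u, ∫⁻ y, W (F s u y) ∂ν ≤
      ENNReal.ofReal (1 - θ) * W s + ENNReal.ofReal (θ * M)) (n : ℕ) :
    ∫⁻ ω, W (S n ω) ∂P ≤ ENNReal.ofReal (1 + M) * ∫⁻ ω, W (S 0 ω) ∂P := by
  refine le_mul_of_le_contraction (a := fun n => ∫⁻ ω, W (S n ω) ∂P) hθ hθ1 hM ?_ ?_ n
  · calc (1 : ℝ≥0∞) = ∫⁻ _, 1 ∂P := by rw [lintegral_one, measure_univ]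
      _ ≤ ∫⁻ ω, W (S 0 ω) ∂P := lintegral_mono fun ω => hW1 _
  · intro n
    have hSn : Measurable (S n) :=
      measurable_randomRecursion hF hS hS0 n (fun i _ => hw i) fun i _ => hξ i
    calc ∫⁻ ω, W (S (n + 1) ω) ∂P
        = ∫⁻ ω, W (F (S n ω) (w n ω) (ξ n ω)) ∂P := by simp only [hS]
      _ = ∫⁻ ω, ∫⁻ y, W (F (S n ω) (w n ω) y) ∂ν ∂P := by
          rw [← hlaw n]
          exact lintegral_comp_prodMk_of_indepFun (hW.comp hF) (hSn.prodMk (hw n)) (hξ n)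
            (hind n)
      _ ≤ ∫⁻ ω, (ENNReal.ofReal (1 - θ) * W (S n ω) + ENNReal.ofReal (θ * M)) ∂P :=
          lintegral_mono fun ω => hdrift _ _
      _ = ENNReal.ofReal (1 - θ) * ∫⁻ ω, W (S n ω) ∂P + ENNReal.ofReal (θ * M) := by
          rw [lintegral_add_right _ measurable_const,
            lintegral_const_mul' _ _ ENNReal.ofReal_ne_top, lintegral_const, measure_univ,
            mul_one]

end RandomRecursion

section Langevin

variable {E : Type*} [NormedAddCommGroup E] [InnerProductSpace ℝ E]

/-- One Euler–Maruyama step of underdamped Langevin dynamics from the position–velocity pair `z`,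
with gradient estimate `g` and noise `ξ`. -/
noncomputable def langevinStep (γ h : ℝ) (z : E × E) (g ξ : E) : E × E :=
  (z.1 + h • z.2, z.2 - h • g - (γ * h) • z.2 + √(2 * γ * h) • ξ)

/-- The Lyapunov function of underdamped Langevin dynamics. The combination `γ x + v` is used
because friction leaves it unchanged. -/
noncomputable def langevinLyapunov (γ : ℝ) (z : E × E) : ℝ :=
  1 + ‖γ • z.1 + z.2‖ ^ 2 + ‖z.2‖ ^ 2

/-- The vector `p` for which `⟪p, ξ⟫` is the part of the one-step increment of `langevinLyapunov`
that is linear in the noise `ξ`. -/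
noncomputable def langevinNoiseCoeff (γ h : ℝ) (z : E × E) (g : E) : E :=
  (2 * √(2 * γ * h)) • (γ • z.1 + z.2 + z.2 - (2 * h) • g - (γ * h) • z.2)

lemma one_le_langevinLyapunov (γ : ℝ) (z : E × E) : 1 ≤ langevinLyapunov γ z := by
  rw [langevinLyapunov, add_assoc]
  exact le_add_of_nonneg_right (by positivity)

lemma norm_snd_le_sqrt_langevinLyapunov (γ : ℝ) (z : E × E) :
    ‖z.2‖ ≤ √(langevinLyapunov γ z) := by
  refine Real.le_sqrt_of_sq_le ?_
  rw [langevinLyapunov]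
  linarith [sq_nonneg ‖γ • z.1 + z.2‖]

lemma norm_smul_add_le_sqrt_langevinLyapunov (γ : ℝ) (z : E × E) :
    ‖γ • z.1 + z.2‖ ≤ √(langevinLyapunov γ z) := by
  refine Real.le_sqrt_of_sq_le ?_
  rw [langevinLyapunov]
  linarith [sq_nonneg ‖z.2‖]

lemma measurable_langevinLyapunov [MeasurableSpace E] [BorelSpace E]
    [SecondCountableTopology E] (γ : ℝ) :
    Measurable (langevinLyapunov γ : E × E → ℝ) := by
  unfold langevinLyapunov
  fun_prop

lemma measurable_langevinStep [MeasurableSpace E] [BorelSpace E] [SecondCountableTopology E]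
    {Ω' : Type*} [MeasurableSpace Ω'] {b : E → Ω' → E} (hb : Measurable (Function.uncurry b))
    (γ h : ℝ) :
    Measurable fun q : ((E × E) × Ω') × E =>
      langevinStep γ h q.1.1 (b q.1.1.1 q.1.2) q.2 := by
  have hgrad : Measurable fun q : ((E × E) × Ω') × E => b q.1.1.1 q.1.2 :=
    hb.comp (f := fun q : ((E × E) × Ω') × E => (q.1.1.1, q.1.2)) (by fun_prop)
  have hstep : Measurable fun q : (E × E) × E × E => langevinStep γ h q.1 q.2.1 q.2.2 := by
    unfold langevinStep
    fun_prop
  exact hstep.comp (measurable_fst.fst.prodMk (hgrad.prodMk measurable_snd))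

variable {γ : ℝ}

lemma norm_smul_add_le (hγ : 0 ≤ γ) (x v : E) : ‖γ • x + v‖ ≤ γ * ‖x‖ + ‖v‖ :=
  (norm_add_le _ _).trans_eq (by rw [norm_smul, Real.norm_of_nonneg hγ])

lemma mul_norm_le_norm_smul_add (hγ : 0 ≤ γ) (x v : E) :
    γ * ‖x‖ ≤ ‖γ • x + v‖ + ‖v‖ := by
  simpa only [add_sub_cancel_right, norm_smul, Real.norm_of_nonneg hγ] using
    norm_sub_le (γ • x + v) v

lemma langevinLyapunov_le (hγ : 0 ≤ γ) (z : E × E) :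
    langevinLyapunov γ z ≤ 1 + 2 * γ ^ 2 * ‖z.1‖ ^ 2 + 3 * ‖z.2‖ ^ 2 := by
  have hsq : ‖γ • z.1 + z.2‖ ^ 2 ≤ 2 * ((γ * ‖z.1‖) ^ 2 + ‖z.2‖ ^ 2) :=
    (pow_le_pow_left₀ (norm_nonneg _) (norm_smul_add_le hγ _ _) 2).trans add_sq_le
  rw [langevinLyapunov]
  linarith

lemma langevinLyapunov_rpow_le (hγ : 0 ≤ γ) {r : ℝ} (hr : 0 ≤ r) (z : E × E) :
    langevinLyapunov γ z ^ r ≤ (3 + 2 * γ ^ 2) ^ r * (‖z.1‖ + ‖z.2‖ + 1) ^ (2 * r) := by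
  rw [Real.rpow_mul (by positivity), Real.rpow_two, ← Real.mul_rpow (by positivity) (by positivity)]
  refine Real.rpow_le_rpow (zero_le_one.trans (one_le_langevinLyapunov γ z)) ?_ hr
  refine (langevinLyapunov_le hγ z).trans ?_
  have hexpand : 1 + ‖z.1‖ ^ 2 + ‖z.2‖ ^ 2 ≤ (‖z.1‖ + ‖z.2‖ + 1) ^ 2 := by
    have : 0 ≤ ‖z.1‖ * ‖z.2‖ + ‖z.1‖ + ‖z.2‖ := by positivity
    linarith
  have hslack : 0 ≤ 2 * γ ^ 2 * (1 + ‖z.2‖ ^ 2) := by positivity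
  calc 1 + 2 * γ ^ 2 * ‖z.1‖ ^ 2 + 3 * ‖z.2‖ ^ 2
      ≤ (3 + 2 * γ ^ 2) * (1 + ‖z.1‖ ^ 2 + ‖z.2‖ ^ 2) := by linarith [sq_nonneg ‖z.1‖]
    _ ≤ (3 + 2 * γ ^ 2) * (‖z.1‖ + ‖z.2‖ + 1) ^ 2 := by gcongr

lemma norm_add_norm_rpow_le_langevinLyapunov (hγ : 0 < γ) {r : ℝ} (hr : 0 ≤ r) (z : E × E) :
    (‖z.1‖ + ‖z.2‖ + 1) ^ (2 * r) ≤ (3 * (1 + γ⁻¹) ^ 2) ^ r * langevinLyapunov γ z ^ r := by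
  rw [Real.rpow_mul (by positivity), Real.rpow_two, ← Real.mul_rpow (by positivity)
    (zero_le_one.trans (one_le_langevinLyapunov γ z))]
  refine Real.rpow_le_rpow (by positivity) ?_ hr
  set y := ‖γ • z.1 + z.2‖
  have hy0 : 0 ≤ y := norm_nonneg _
  have hx : ‖z.1‖ ≤ γ⁻¹ * (y + ‖z.2‖) := by
    rw [inv_mul_eq_div, le_div_iff₀' hγ]
    exact mul_norm_le_norm_smul_add hγ.le _ _
  calc (‖z.1‖ + ‖z.2‖ + 1) ^ 2 ≤ ((1 + γ⁻¹) * (y + ‖z.2‖ + 1)) ^ 2 := by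
        gcongr
        linarith [inv_pos.2 hγ]
    _ = (1 + γ⁻¹) ^ 2 * (y + ‖z.2‖ + 1) ^ 2 := mul_pow _ _ _
    _ ≤ (1 + γ⁻¹) ^ 2 * (3 * (1 + y ^ 2 + ‖z.2‖ ^ 2)) := by
        gcongr
        linarith [sq_nonneg (y - ‖z.2‖), sq_nonneg (y - 1), sq_nonneg (‖z.2‖ - 1)]
    _ = 3 * (1 + γ⁻¹) ^ 2 * langevinLyapunov γ z := by
        rw [langevinLyapunov]
        ring

lemma langevinLyapunov_langevinStep {h : ℝ} (hγ : 0 ≤ γ) (hh : 0 ≤ h) (z : E × E) (g ξ : E) :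
    langevinLyapunov γ (langevinStep γ h z g ξ) = langevinLyapunov γ z
      + h * (-(2 * γ) * ⟪z.1, g⟫ - 4 * ⟪z.2, g⟫ - 2 * γ * ‖z.2‖ ^ 2
        + h * (‖g‖ ^ 2 + ‖g + γ • z.2‖ ^ 2))
      + ⟪langevinNoiseCoeff γ h z g, ξ⟫ + 4 * γ * h * ‖ξ‖ ^ 2 := by
  obtain ⟨x, v⟩ := z
  set s := √(2 * γ * h)
  have hss : s ^ 2 = 2 * γ * h := Real.sq_sqrt (by positivity)
  set a := γ • x + v - h • g with ha
  set c := v - h • (g + γ • v) with hc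
  have hfriction : γ • (x + h • v) + (v - h • g - (γ * h) • v + s • ξ) = a + s • ξ := by
    module
  have hvelocity : v - h • g - (γ * h) • v + s • ξ = c + s • ξ := by
    module
  have hnoise : langevinNoiseCoeff γ h (x, v) g = (2 * s) • (a + c) := by
    rw [langevinNoiseCoeff]
    module
  have hnorm_a : ‖a‖ ^ 2 = ‖γ • x + v‖ ^ 2 - 2 * h * (γ * ⟪x, g⟫ + ⟪v, g⟫) + h ^ 2 * ‖g‖ ^ 2 := by
    rw [ha, norm_sub_sq_real, inner_smul_right, inner_add_left, real_inner_smul_left, norm_smul,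
      mul_pow, Real.norm_eq_abs, sq_abs]
    ring
  have hnorm_c : ‖c‖ ^ 2 =
      ‖v‖ ^ 2 - 2 * h * (⟪v, g⟫ + γ * ‖v‖ ^ 2) + h ^ 2 * ‖g + γ • v‖ ^ 2 := by
    rw [hc, norm_sub_sq_real, inner_smul_right, inner_add_right, real_inner_smul_right, norm_smul,
      mul_pow, Real.norm_eq_abs, sq_abs, real_inner_self_eq_norm_sq]
    ring
  calc langevinLyapunov γ (langevinStep γ h (x, v) g ξ)
      = 1 + ‖a + s • ξ‖ ^ 2 + ‖c + s • ξ‖ ^ 2 := by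
        rw [langevinLyapunov, langevinStep, hfriction, hvelocity]
    _ = 1 + ‖a‖ ^ 2 + ‖c‖ ^ 2 + ⟪(2 * s) • (a + c), ξ⟫ + 2 * s ^ 2 * ‖ξ‖ ^ 2 := by
        rw [norm_add_sq_real, norm_add_sq_real, inner_smul_right, inner_smul_right, norm_smul,
          real_inner_smul_left, inner_add_left, mul_pow, Real.norm_eq_abs, sq_abs]
        ring
    _ = _ := by
        rw [hnorm_a, hnorm_c, hss, hnoise, langevinLyapunov]
        ring

variable {C₀ C₁ m h : ℝ} {z : E × E} {g : E}

/-- The condition `16 C₁² ≤ m γ²` lets friction dominate the cross term `⟪v, g⟫`. -/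
lemma langevin_drift_le (hm : 0 < m) (hγ : 0 < γ) (hγC : 16 * C₁ ^ 2 ≤ m * γ ^ 2)
    (hh : 0 ≤ h) (hγh : 4 * γ * h ≤ 1)
    (hg : ‖g‖ ≤ C₁ * (1 + ‖z.1‖)) (hzg : m * ‖z.1‖ ^ 2 - C₀ ≤ ⟪z.1, g⟫) :
    -(2 * γ) * ⟪z.1, g⟫ - 4 * ⟪z.2, g⟫ - 2 * γ * ‖z.2‖ ^ 2 + h * (‖g‖ ^ 2 + ‖g + γ • z.2‖ ^ 2)
      ≤ -(γ * m * ‖z.1‖ ^ 2) - γ / 2 * ‖z.2‖ ^ 2 + γ * (2 * C₀ + m) := by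
  set X := ‖z.1‖
  set Y := ‖z.2‖
  have hyoung : ∀ u : ℝ, 4 * C₁ * u * Y ≤ γ / 2 * (m * u ^ 2) + γ / 2 * Y ^ 2 := fun u => by
    refine le_of_mul_le_mul_right ?_ (by positivity : 0 < 2 * γ * m)
    nlinarith [sq_nonneg (γ * m * u - 4 * C₁ * Y),
      mul_le_mul_of_nonneg_right hγC (mul_nonneg hm.le (sq_nonneg Y))]
  have hcross : -⟪z.2, g⟫ ≤ C₁ * (1 + X) * Y := by
    calc -⟪z.2, g⟫ ≤ ‖z.2‖ * ‖g‖ := (neg_le_abs _).trans (abs_real_inner_le_norm _ _)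
      _ ≤ C₁ * (1 + X) * Y := by rw [mul_comm]; gcongr
  have hg_sq : ‖g‖ ^ 2 ≤ 2 * C₁ ^ 2 * (1 + X ^ 2) := by
    calc ‖g‖ ^ 2 ≤ C₁ ^ 2 * (1 + X) ^ 2 := by rw [← mul_pow]; gcongr
      _ ≤ C₁ ^ 2 * (2 * (1 ^ 2 + X ^ 2)) := by gcongr; exact add_sq_le
      _ = 2 * C₁ ^ 2 * (1 + X ^ 2) := by ring
  have hgv_sq : ‖g + γ • z.2‖ ^ 2 ≤ 2 * (‖g‖ ^ 2 + (γ * Y) ^ 2) := by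
    rw [add_comm g]
    refine (pow_le_pow_left₀ (norm_nonneg _) (norm_smul_add_le hγ.le z.2 g) 2).trans ?_
    rw [add_comm (‖g‖ ^ 2)]
    exact add_sq_le
  have hhC : 12 * C₁ ^ 2 * h ≤ γ * m := by
    nlinarith [mul_le_mul_of_nonneg_right hγC hh, mul_le_mul_of_nonneg_left hγh
      (mul_pos hγ hm).le]
  have hsecond : h * (‖g‖ ^ 2 + ‖g + γ • z.2‖ ^ 2) ≤
      γ / 2 * (m * (1 + X ^ 2)) + γ / 2 * Y ^ 2 := by
    calc h * (‖g‖ ^ 2 + ‖g + γ • z.2‖ ^ 2)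
        ≤ h * (6 * C₁ ^ 2 * (1 + X ^ 2) + 2 * (γ * Y) ^ 2) :=
          mul_le_mul_of_nonneg_left (by linarith) hh
      _ = 12 * C₁ ^ 2 * h * ((1 + X ^ 2) / 2) + 4 * γ * h * (γ / 2 * Y ^ 2) := by ring
      _ ≤ γ * m * ((1 + X ^ 2) / 2) + 1 * (γ / 2 * Y ^ 2) := by gcongr
      _ = γ / 2 * (m * (1 + X ^ 2)) + γ / 2 * Y ^ 2 := by ring
  linarith [hyoung 1, hyoung X, mul_le_mul_of_nonneg_left hzg hγ.le]

lemma norm_langevinNoiseCoeff_le (hγ : 0 < γ) (hh : 0 ≤ h) (hh1 : h ≤ 1)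
    (hγh : γ * h ≤ 1) (hg : ‖g‖ ≤ C₁ * (1 + ‖z.1‖)) :
    ‖langevinNoiseCoeff γ h z g‖ ≤
      2 * √(2 * γ) * (3 + 2 * C₁ * (1 + 2 / γ)) * √(h * langevinLyapunov γ z) := by
  have hC₁ : 0 ≤ C₁ := nonneg_of_mul_nonneg_left ((norm_nonneg g).trans hg) (by positivity)
  set n := √(langevinLyapunov γ z) with hn
  have hv : ‖z.2‖ ≤ n := norm_snd_le_sqrt_langevinLyapunov γ z
  have hy : ‖γ • z.1 + z.2‖ ≤ n := norm_smul_add_le_sqrt_langevinLyapunov γ z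
  have hx : ‖z.1‖ ≤ 2 / γ * n := by
    rw [div_mul_eq_mul_div, le_div_iff₀' hγ]
    linarith [mul_norm_le_norm_smul_add hγ.le z.1 z.2]
  have hgrad : ‖(2 * h) • g‖ ≤ 2 * C₁ * (1 + 2 / γ) * n := by
    rw [norm_smul, Real.norm_of_nonneg (by positivity)]
    calc 2 * h * ‖g‖ ≤ 2 * 1 * (C₁ * (n + 2 / γ * n)) := by
          gcongr
          refine hg.trans ?_
          gcongr
          exact Real.one_le_sqrt.2 (one_le_langevinLyapunov γ z)
      _ = 2 * C₁ * (1 + 2 / γ) * n := by ring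
  have hfriction : ‖(γ * h) • z.2‖ ≤ n := by
    rw [norm_smul, Real.norm_of_nonneg (by positivity)]
    exact (mul_le_of_le_one_left (norm_nonneg _) hγh).trans hv
  have hsum : ‖γ • z.1 + z.2 + z.2 - (2 * h) • g - (γ * h) • z.2‖ ≤
      (3 + 2 * C₁ * (1 + 2 / γ)) * n := by
    calc ‖γ • z.1 + z.2 + z.2 - (2 * h) • g - (γ * h) • z.2‖
        ≤ ‖γ • z.1 + z.2‖ + ‖z.2‖ + ‖(2 * h) • g‖ + ‖(γ * h) • z.2‖ :=
          (norm_sub_le _ _).trans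
            (add_le_add_left ((norm_sub_le _ _).trans (add_le_add_left (norm_add_le _ _) _)) _)
      _ ≤ n + n + 2 * C₁ * (1 + 2 / γ) * n + n := by gcongr
      _ = (3 + 2 * C₁ * (1 + 2 / γ)) * n := by ring
  rw [langevinNoiseCoeff, norm_smul, Real.norm_of_nonneg (by positivity),
    Real.sqrt_mul (by positivity) h, Real.sqrt_mul hh, ← hn]
  calc 2 * (√(2 * γ) * √h) * ‖γ • z.1 + z.2 + z.2 - (2 * h) • g - (γ * h) • z.2‖
      ≤ 2 * (√(2 * γ) * √h) * ((3 + 2 * C₁ * (1 + 2 / γ)) * n) := by gcongr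
    _ = 2 * √(2 * γ) * (3 + 2 * C₁ * (1 + 2 / γ)) * (√h * n) := by ring

lemma langevinLyapunov_langevinStep_le {l : ℝ} (hm : 0 < m) (hC₀ : 0 ≤ C₀)
    (hγ : 0 < γ) (hγC : 16 * C₁ ^ 2 ≤ m * γ ^ 2) (hl : 0 ≤ l) (hlm : l * (2 * γ) ≤ m)
    (hlγ : l * 6 ≤ γ) (hh : 0 ≤ h) (hγh : 4 * γ * h ≤ 1)
    (hg : ‖g‖ ≤ C₁ * (1 + ‖z.1‖)) (hzg : m * ‖z.1‖ ^ 2 - C₀ ≤ ⟪z.1, g⟫) (ξ : E) :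
    langevinLyapunov γ (langevinStep γ h z g ξ) ≤ langevinLyapunov γ z
      + h * (-l * langevinLyapunov γ z + (γ * (2 * C₀ + m) + l + 4 * γ) * (1 + ‖ξ‖) ^ 2)
      + ⟪langevinNoiseCoeff γ h z g, ξ⟫ := by
  have hdecay : l * langevinLyapunov γ z ≤ l + γ * m * ‖z.1‖ ^ 2 + γ / 2 * ‖z.2‖ ^ 2 := by
    calc l * langevinLyapunov γ z ≤ l * (1 + 2 * γ ^ 2 * ‖z.1‖ ^ 2 + 3 * ‖z.2‖ ^ 2) := by
          gcongr
          exact langevinLyapunov_le hγ.le z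
      _ = l + γ * (l * (2 * γ)) * ‖z.1‖ ^ 2 + l * 6 / 2 * ‖z.2‖ ^ 2 := by ring
      _ ≤ l + γ * m * ‖z.1‖ ^ 2 + γ / 2 * ‖z.2‖ ^ 2 := by gcongr
  have hdrift := langevin_drift_le hm hγ hγC hh hγh hg hzg
  have hconst : γ * (2 * C₀ + m) + l + 4 * γ * ‖ξ‖ ^ 2 ≤
      (γ * (2 * C₀ + m) + l + 4 * γ) * (1 + ‖ξ‖) ^ 2 := by
    have hone : 1 ≤ (1 + ‖ξ‖) ^ 2 := one_le_pow₀ (by simp)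
    have hnoise : ‖ξ‖ ^ 2 ≤ (1 + ‖ξ‖) ^ 2 := by gcongr; simp
    rw [add_mul]
    gcongr
    exact le_mul_of_one_le_right (by positivity) hone
  rw [langevinLyapunov_langevinStep hγ.le hh]
  linarith [mul_le_mul_of_nonneg_left (add_le_add hdecay (add_le_add hdrift hconst)) hh]

theorem exists_lintegral_langevinLyapunov_contraction [CompleteSpace E] [MeasurableSpace E]
    {ν : Measure E} [IsProbabilityMeasure ν] (hmom : ∀ N : ℕ, MemLp id N ν)
    (hmean : ∫ ξ, ξ ∂ν = 0) (hm : 0 < m) (hC₀ : 0 ≤ C₀) (hC₁ : 0 ≤ C₁) (hγ : 0 < γ)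
    (hγC : 16 * C₁ ^ 2 ≤ m * γ ^ 2) {r : ℝ} (hr : 0 < r) :
    ∃ α > (0 : ℝ), ∃ M ≥ (0 : ℝ), ∃ h₀ > (0 : ℝ), ∀ h, 0 < h → h ≤ h₀ → α * h ≤ 1 ∧
      ∀ (z : E × E) (g : E), ‖g‖ ≤ C₁ * (1 + ‖z.1‖) → m * ‖z.1‖ ^ 2 - C₀ ≤ ⟪z.1, g⟫ →
        ∫⁻ ξ, ENNReal.ofReal (langevinLyapunov γ (langevinStep γ h z g ξ) ^ r) ∂ν ≤
          ENNReal.ofReal (1 - α * h) * ENNReal.ofReal (langevinLyapunov γ z ^ r)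
            + ENNReal.ofReal (α * h * M) := by
  set l := min (m / (2 * γ)) (γ / 6)
  obtain ⟨hlm, hlγ⟩ : l * (2 * γ) ≤ m ∧ l * 6 ≤ γ := by
    rw [← le_div_iff₀ (by positivity), ← le_div_iff₀ (by positivity)]
    exact ⟨min_le_left _ _, min_le_right _ _⟩
  have hl0 : 0 < l := by positivity
  obtain ⟨α, hα, M, hM, h₁, hh₁, hcontr⟩ := exists_lintegral_rpow_contraction hmom hmean hr hl0
    (by positivity : 0 ≤ γ * (2 * C₀ + m) + l + 4 * γ)
    (by positivity : 0 ≤ 2 * √(2 * γ) * (3 + 2 * C₁ * (1 + 2 / γ)))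
  refine ⟨α, hα, M, hM, min h₁ (min 1 (1 / (4 * γ))), by positivity, fun h hh hle => ?_⟩
  obtain ⟨hle₁, hh1, hγh⟩ : h ≤ h₁ ∧ h ≤ 1 ∧ h * (4 * γ) ≤ 1 := by
    simpa only [le_min_iff, le_div_iff₀ (by positivity : 0 < 4 * γ)] using hle
  obtain ⟨hαh, hcontr⟩ := hcontr h hh hle₁
  refine ⟨hαh, fun z g hg hzg => ?_⟩
  exact hcontr (langevinLyapunov γ z) (langevinNoiseCoeff γ h z g) _
    (one_le_langevinLyapunov γ z)
    (norm_langevinNoiseCoeff_le hγ hh.le hh1 (by nlinarith) hg)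
    (fun ξ => zero_le_one.trans (one_le_langevinLyapunov γ _))
    (langevinLyapunov_langevinStep_le hm hC₀ hγ hγC hl0.le hlm hlγ hh.le (by linarith) hg hzg)

end Langevin

lemma lintegral_ofReal_le_of_le_mul {α : Type*} [MeasurableSpace α] {μ : Measure α}
    {f g : α → ℝ} {c : ℝ} (hc : 0 ≤ c) (hfg : ∀ a, f a ≤ c * g a) :
    ∫⁻ a, ENNReal.ofReal (f a) ∂μ ≤ ENNReal.ofReal c * ∫⁻ a, ENNReal.ofReal (g a) ∂μ := by
  rw [← lintegral_const_mul' _ _ ENNReal.ofReal_ne_top]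
  refine lintegral_mono fun a => ?_
  rw [← ENNReal.ofReal_mul hc]
  exact ENNReal.ofReal_le_ofReal (hfg a)

theorem statement14_general {E Ω' : Type*} [NormedAddCommGroup E] [InnerProductSpace ℝ E]
    [CompleteSpace E] [MeasurableSpace E] [BorelSpace E] [SecondCountableTopology E]
    [MeasurableSpace Ω'] {ν : Measure E} [IsProbabilityMeasure ν]
    (hmom : ∀ N : ℕ, MemLp id N ν) (hmean : ∫ ξ, ξ ∂ν = 0)
    {C₀ C₁ m γ : ℝ} (hm : 0 < m) (hC₀ : 0 ≤ C₀) (hC₁ : 0 ≤ C₁) (hγ : 0 < γ)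
    (hγC : 4 * C₁ ≤ √m * γ) {b : E → Ω' → E} (hbmeas : Measurable (Function.uncurry b))
    (hbgrowth : ∀ x ω', ‖b x ω'‖ ≤ C₁ * (1 + ‖x‖))
    (hbdrift : ∀ x ω', m * ‖x‖ ^ 2 - C₀ ≤ ⟪x, b x ω'⟫) {r : ℝ} (hr : 0 < r) :
    ∃ C > (0 : ℝ), ∃ h₀ > (0 : ℝ), ∀ h : ℝ, 0 < h → h ≤ h₀ →
      ∀ (Ω : Type*) (_ : MeasurableSpace Ω) (P : Measure Ω), IsProbabilityMeasure P →
      ∀ (X V ξ : ℕ → Ω → E) (w : ℕ → Ω → Ω'),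
        Measurable (X 0) → Measurable (V 0) →
        (∀ n, Measurable (ξ n)) → (∀ n, Measurable (w n)) →
        (∀ n, P.map (ξ n) = ν) →
        (∀ n, IndepFun (fun ω => ((X n ω, V n ω), w n ω)) (ξ n) P) →
        (∀ n ω, X (n + 1) ω = X n ω + h • V n ω) →
        (∀ n ω, V (n + 1) ω = V n ω - h • b (X n ω) (w n ω) - (γ * h) • V n ω
            + √(2 * γ * h) • ξ n ω) →
        ∀ n, ∫⁻ ω, ENNReal.ofReal ((‖X n ω‖ + ‖V n ω‖ + 1) ^ (2 * r)) ∂P ≤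
          ENNReal.ofReal C *
            ∫⁻ ω, ENNReal.ofReal ((‖X 0 ω‖ + ‖V 0 ω‖ + 1) ^ (2 * r)) ∂P := by
  have hγC_sq : 16 * C₁ ^ 2 ≤ m * γ ^ 2 := by
    calc 16 * C₁ ^ 2 = (4 * C₁) ^ 2 := by ring
      _ ≤ (√m * γ) ^ 2 := by gcongr
      _ = m * γ ^ 2 := by rw [mul_pow, Real.sq_sqrt hm.le]
  obtain ⟨α, hα, M, hM, h₀, hh₀, hcontr⟩ := exists_lintegral_langevinLyapunov_contraction
    hmom hmean hm hC₀ hC₁ hγ hγC_sq hr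
  refine ⟨(3 * (1 + γ⁻¹) ^ 2) ^ r * (1 + M) * (3 + 2 * γ ^ 2) ^ r, by positivity, h₀, hh₀, ?_⟩
  intro h hh hle Ω _ P _ X V ξ w hX0 hV0 hξ hw hlaw hind hX hV n
  obtain ⟨hαh, hcontr⟩ := hcontr h hh hle
  set L : E × E → ℝ≥0∞ := fun z => ENNReal.ofReal (langevinLyapunov γ z ^ r)
  have hL : Measurable L := ((measurable_langevinLyapunov γ).pow_const r).ennreal_ofReal
  have hL1 : ∀ z, 1 ≤ L z := fun z =>
    ENNReal.one_le_ofReal.2 (Real.one_le_rpow (one_le_langevinLyapunov γ z) hr.le)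
  calc ∫⁻ ω, ENNReal.ofReal ((‖X n ω‖ + ‖V n ω‖ + 1) ^ (2 * r)) ∂P
      ≤ ENNReal.ofReal ((3 * (1 + γ⁻¹) ^ 2) ^ r) * ∫⁻ ω, L (X n ω, V n ω) ∂P :=
        lintegral_ofReal_le_of_le_mul (by positivity) fun ω =>
          norm_add_norm_rpow_le_langevinLyapunov hγ hr.le (X n ω, V n ω)
    _ ≤ ENNReal.ofReal ((3 * (1 + γ⁻¹) ^ 2) ^ r) *
          (ENNReal.ofReal (1 + M) * ∫⁻ ω, L (X 0 ω, V 0 ω) ∂P) := by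
        gcongr
        exact lintegral_randomRecursion_le (S := fun n ω => (X n ω, V n ω))
          (measurable_langevinStep hbmeas γ h) (fun n ω => Prod.ext (hX n ω) (hV n ω))
          (hX0.prodMk hV0) hw hξ hlaw hind hL hL1 (by positivity) hαh hM
          (fun z u => hcontr z (b z.1 u) (hbgrowth _ _) (hbdrift _ _)) n
    _ ≤ ENNReal.ofReal ((3 * (1 + γ⁻¹) ^ 2) ^ r) * (ENNReal.ofReal (1 + M) *
          (ENNReal.ofReal ((3 + 2 * γ ^ 2) ^ r) *
            ∫⁻ ω, ENNReal.ofReal ((‖X 0 ω‖ + ‖V 0 ω‖ + 1) ^ (2 * r)) ∂P)) := by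
        gcongr
        exact lintegral_ofReal_le_of_le_mul (by positivity) fun ω =>
          langevinLyapunov_rpow_le hγ.le hr.le (X 0 ω, V 0 ω)
    _ = _ := by
        rw [ENNReal.ofReal_mul (by positivity), ENNReal.ofReal_mul (by positivity), mul_assoc,
          mul_assoc]

lemma map_eq_stdGaussian_of_map_pi {Ω ι : Type*} [Fintype ι] [MeasurableSpace Ω]
    {P : Measure Ω} {ξ : Ω → EuclideanSpace ℝ ι} (hξ : Measurable ξ)
    (hlaw : P.map (fun ω i => ξ ω i) = Measure.pi fun _ : ι => gaussianReal 0 1) :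
    P.map ξ = stdGaussian (EuclideanSpace ℝ ι) := by
  rw [← map_pi_eq_stdGaussian, ← hlaw, Measure.map_map (by fun_prop) (by fun_prop)]
  rfl

/-- uniform-in-time `2r`-th moment bound for the stochastic gradient
Euler–Maruyama chain for the underdamped Langevin dynamics, under A1, A2 and A4. -/
theorem statement14 (d : ℕ) (hd : 1 ≤ d) (U : EuclideanSpace ℝ (Fin d) → ℝ)
    (C₀ C₁ m R : ℝ) (hC₀ : 0 < C₀) (hC₁ : 0 < C₁) (hm : 0 < m) (hR : 0 < R)
    -- A1
    (hU : ContDiff ℝ 3 U)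
    (hU0 : ∀ x, |U x| ≤ C₁ * (‖x‖ + 1) ^ 2)
    (hU1 : ∀ x, ‖gradient U x‖ ≤ C₁ * (‖x‖ + 1))
    (hU2 : ∀ x, ‖iteratedFDeriv ℝ 2 U x‖ ≤ C₁)
    (hU3 : ∀ x, ‖iteratedFDeriv ℝ 3 U x‖ ≤ C₁)
    -- A2
    (hconv : ∀ x, R ≤ ‖x‖ → ∀ y, m * ‖y‖ ^ 2 ≤ iteratedFDeriv ℝ 2 U x ![y, y])
    -- A4: the stochastic gradient b on a probability space (Ω', 𝒢, μ)
    (Ω' : Type) (𝒢 : MeasurableSpace Ω') (μ : Measure Ω') (hμ : IsProbabilityMeasure μ)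
    (b : EuclideanSpace ℝ (Fin d) → Ω' → EuclideanSpace ℝ (Fin d))
    (hbmeas : Measurable (Function.uncurry b))
    (hbgrowth : ∀ x ω', ‖b x ω'‖ ≤ C₁ * (1 + ‖x‖))
    (hbdiff : ∀ ω', Differentiable ℝ (fun y => b y ω'))
    (hbderiv : ∀ x ω', ‖fderiv ℝ (fun y => b y ω') x‖ ≤ C₁)
    (hbdrift : ∀ x ω', m * ‖x‖ ^ 2 - C₀ ≤ ⟪x, b x ω'⟫)
    (hbunbiased : ∀ x, (∫ ω', b x ω' ∂μ) = gradient U x)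
    (r : ℝ) (hr : 1 ≤ r) :
    ∃ γ₀ > (0 : ℝ), ∀ γ ≥ γ₀, ∃ C > (0 : ℝ), ∃ h₀ > (0 : ℝ), ∀ h : ℝ, 0 < h → h ≤ h₀ →
      ∀ (Ω : Type) (_ : MeasurableSpace Ω) (P : Measure Ω), IsProbabilityMeasure P →
      ∀ (X V ξ : ℕ → Ω → EuclideanSpace ℝ (Fin d)) (w : ℕ → Ω → Ω'),
        Measurable (X 0) → Measurable (V 0) →
        (∀ n, Measurable (ξ n)) → (∀ n, Measurable (w n)) →
        -- each ξ_n is a standard Gaussian random vector in ℝ^d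
        (∀ n, Measure.map (fun ω i => ξ n ω i) P =
          Measure.pi fun _ : Fin d => gaussianReal 0 1) →
        -- each ω_n has law μ
        (∀ n, Measure.map (w n) P = μ) →
        -- (X₀,V₀), ξ₀, ξ₁, …, ω₀, ω₁, … are mutually independent
        iIndep (fun i : Option (ℕ ⊕ ℕ) =>
          Option.elim i (MeasurableSpace.comap (fun ω => (X 0 ω, V 0 ω)) inferInstance)
            (Sum.elim (fun n => MeasurableSpace.comap (ξ n) inferInstance)
              fun n => MeasurableSpace.comap (w n) inferInstance)) P →
        -- stochastic gradient Euler–Maruyama recursion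
        (∀ n ω, X (n + 1) ω = X n ω + h • V n ω) →
        (∀ n ω, V (n + 1) ω = V n ω - h • b (X n ω) (w n ω) - (γ * h) • V n ω
            + Real.sqrt (2 * γ * h) • ξ n ω) →
        -- finite initial moment
        (∫⁻ ω, ENNReal.ofReal ((‖X 0 ω‖ + ‖V 0 ω‖ + 1) ^ (2 * r)) ∂P) < ∞ →
        ∀ n, (∫⁻ ω, ENNReal.ofReal ((‖X n ω‖ + ‖V n ω‖ + 1) ^ (2 * r)) ∂P) ≤
          ENNReal.ofReal C *
            ∫⁻ ω, ENNReal.ofReal ((‖X 0 ω‖ + ‖V 0 ω‖ + 1) ^ (2 * r)) ∂P := by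
  refine ⟨4 * C₁ / √m, by positivity, fun γ hγ => ?_⟩
  have hγ0 : 0 < γ := lt_of_lt_of_le (by positivity) hγ
  obtain ⟨C, hC, h₀, hh₀, hbound⟩ := statement14_general
    (fun N => IsGaussian.memLp_id (stdGaussian (EuclideanSpace ℝ (Fin d))) N (by simp))
    integral_id_stdGaussian hm hC₀.le hC₁.le hγ0 ((div_le_iff₀' (by positivity)).1 hγ)
    hbmeas hbgrowth hbdrift (zero_lt_one.trans_le hr)
  refine ⟨C, hC, h₀, hh₀, fun h hh hle Ω _ P hP X V ξ w hX0 hV0 hξ hw hlaw _ hind hX hV _ => ?_⟩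
  have hstep_indep : ∀ n, IndepFun (fun ω => ((X n ω, V n ω), w n ω)) (ξ n) P :=
    indepFun_randomRecursion (F := fun z u y => langevinStep γ h z (b z.1 u) y)
      (S := fun n ω => (X n ω, V n ω)) (measurable_langevinStep hbmeas γ h)
      (fun n ω => Prod.ext (hX n ω) (hV n ω)) (hX0.prodMk hV0) hw hξ hind
  exact hbound h hh hle Ω _ P hP X V ξ w hX0 hV0 hξ hw
    (fun n => map_eq_stdGaussian_of_map_pi (hξ n) (hlaw n)) hstep_indep hX hV
end
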